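/- arXiv:2411.04514 — 2 statements merged into one kernel-verified Lean document; each statement's English description precedes it below -/
import Mathlib

section
/- Let R be a commutative noetherian ring and (C, W) a hereditary cotorsion pair cogenerated by a class P of pure-injective R-modules of finite injective dimension. Then for any R-module M: (i) M embeds into some module of C if and only if E(M) ∈ C; (ii) M ∈ C if and only if M embeds into some module of C and Ω_{-1}(M) ∈ C_(1). -/
open CategoryTheory Opposite

noncomputable section

/-- Vanishing of the `n`-th Ext group of two `R`-modules. -/
def extV (R : Type) [Ring R] (M N : ModuleCat.{0} R) (n : ℕ) : Prop :=
  Subsingleton (((_root_.Ext ℤ (ModuleCat.{0} R) n).obj (op M)).obj N)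

/-- The left `Ext^1`-orthogonal class. -/
def leftPerp1 (R : Type) [Ring R] (𝒳 : Set (ModuleCat.{0} R)) : Set (ModuleCat.{0} R) :=
  {M | ∀ X ∈ 𝒳, extV R M X 1}

/-- The right `Ext^1`-orthogonal class. -/
def rightPerp1 (R : Type) [Ring R] (𝒳 : Set (ModuleCat.{0} R)) : Set (ModuleCat.{0} R) :=
  {N | ∀ X ∈ 𝒳, extV R X N 1}

/-- `(𝒞, 𝒲)` is a cotorsion pair. -/
def IsCotorsionPair (R : Type) [Ring R] (𝒞 𝒲 : Set (ModuleCat.{0} R)) : Prop :=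
  𝒞 = leftPerp1 R 𝒲 ∧ 𝒲 = rightPerp1 R 𝒞

/-- `(𝒞, 𝒲)` is a hereditary cotorsion pair. -/
def IsHereditaryCotorsionPair (R : Type) [Ring R] (𝒞 𝒲 : Set (ModuleCat.{0} R)) : Prop :=
  IsCotorsionPair R 𝒞 𝒲 ∧ ∀ X ∈ 𝒞, ∀ Y ∈ 𝒲, ∀ i : ℕ, 1 ≤ i → extV R X Y i

/-- The class `𝒞_(i) = {M ∣ Ext^j(M, W) = 0 for all j > i and all W ∈ 𝒲}`. -/
def cotShift (R : Type) [Ring R] (𝒲 : Set (ModuleCat.{0} R)) (i : ℕ) : Set (ModuleCat.{0} R) :=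
  {M | ∀ Y ∈ 𝒲, ∀ j : ℕ, i < j → extV R M Y j}

/-- `f : A →ₗ[R] B` is a pure monomorphism. -/
def IsPureMono (R : Type) [CommRing R] {A B : Type} [AddCommGroup A] [Module R A]
    [AddCommGroup B] [Module R B] (f : A →ₗ[R] B) : Prop :=
  Function.Injective f ∧
    ∀ (Q : Type) [AddCommGroup Q] [Module R Q], Function.Injective (LinearMap.lTensor Q f)

/-- An `R`-module `N` is pure-injective if it is injective with respect to
pure monomorphisms. -/
def PureInjective (R : Type) [CommRing R] (N : Type) [AddCommGroup N] [Module R N] : Prop :=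
  ∀ (A B : Type) [AddCommGroup A] [Module R A] [AddCommGroup B] [Module R B]
    (f : A →ₗ[R] B), IsPureMono R f → ∀ g : A →ₗ[R] N, ∃ h : B →ₗ[R] N, h.comp f = g

/-- `N` has injective dimension at most `n`: all Ext-groups above degree `n` vanish. -/
def injDimLE (R : Type) [Ring R] (N : ModuleCat.{0} R) (n : ℕ) : Prop :=
  ∀ M : ModuleCat.{0} R, ∀ j : ℕ, n < j → extV R M N j

/-- The class of pure-injective `R`-modules of finite injective dimension. -/
def PIFinInj (R : Type) [CommRing R] : Set (ModuleCat.{0} R) :=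
  {N | PureInjective R ↥N ∧ ∃ n : ℕ, injDimLE R N n}

/-- The depth of a module over a commutative noetherian local ring, as the infimum of
the degrees in which `Ext(k, M)` does not vanish (`⊤` if all vanish). -/
def rdepth (A : Type) [CommRing A] [IsLocalRing A] (M : Type) [AddCommGroup M]
    [Module A M] : ℕ∞ :=
  sInf {n : ℕ∞ | ∃ i : ℕ, n = (i : ℕ∞) ∧
    ¬ extV A (ModuleCat.of A (IsLocalRing.ResidueField A)) (ModuleCat.of A M) i}

/-- The residue field `k(p)` of `R_p`, as an `R`-module. -/
abbrev resField (R : Type) [CommRing R] (p : PrimeSpectrum R) : Type :=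
  LocalizedModule p.asIdeal.primeCompl (R ⧸ p.asIdeal)

/-- `depth(R_p)`. -/
def ringDepthAt (R : Type) [CommRing R] (p : PrimeSpectrum R) : ℕ∞ :=
  rdepth (Localization.AtPrime p.asIdeal) (Localization.AtPrime p.asIdeal)

/-- `depth_{R_p}(M_p)`. -/
def depthAt (R : Type) [CommRing R] (p : PrimeSpectrum R) (M : Type) [AddCommGroup M]
    [Module R M] : ℕ∞ :=
  rdepth (Localization.AtPrime p.asIdeal) (LocalizedModule p.asIdeal.primeCompl M)

/-- `f : M →ₗ[R] E` exhibits `E` as an injective envelope of `M`: `E` is injective and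
`f` is an essential monomorphism. -/
def IsInjectiveEnvelope (R : Type) [Ring R] {M E : Type} [AddCommGroup M] [Module R M]
    [AddCommGroup E] [Module R E] (f : M →ₗ[R] E) : Prop :=
  Module.Injective R E ∧ Function.Injective f ∧
    ∀ K : Submodule R E, K ≠ ⊥ → K ⊓ LinearMap.range f ≠ ⊥

/-! Suppose `M` embeds in some `C ∈ 𝒞`, let `E` be its injective envelope, and let `N` be one of the
pure-injective modules cogenerating `𝒞`, of injective dimension at most `n`. Every associated prime
`q` of `E` is associated to `M`, hence to `C` and to `C_q`. The localization `C_q` is a filtered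
colimit of copies of `C`, and vanishing of `Ext^1(-, N)` passes to filtered colimits because the
map from the direct sum onto the colimit is a pure epimorphism; so `C_q ∈ 𝒞`, and
`Ext^i(C_q, N) = 0` for all `i > 0` by heredity. A descending induction from the injective dimension
of `N`, in the spirit of Auslander and Buchsbaum, then gives `Ext^i(k(q), N) = 0` for `i > 0`,
hence `Ext^1(V, N) = 0` for every `q`-local module `V` that is a union of submodules killed by
powers of `q`. The injective module `E` is exhausted by direct sums of such modules, so `E ∈ 𝒞`.
The second equivalence is the long exact sequence of `0 → M → E → Ω_{-1}(M) → 0`.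
-/

universe u

section ExtComparison

theorem subsingleton_ext_succ_iff {C : Type*} [Category* C] [Abelian C] [HasExt.{u} C] {X : C}
    (P : ProjectiveResolution X) (Y : C) (n : ℕ) :
    Subsingleton (Abelian.Ext.{u} X Y (n + 1)) ↔
      ∀ f : P.complex.X (n + 1) ⟶ Y, P.complex.d (n + 2) (n + 1) ≫ f = 0 →
        ∃ g : P.complex.X n ⟶ Y, P.complex.d (n + 1) n ≫ g = f := by
  constructor
  · intro _ f hf
    exact (P.extMk_eq_zero_iff f (n + 2) rfl hf n rfl).mp (Subsingleton.elim _ _)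
  · intro h
    refine subsingleton_of_forall_eq 0 fun x => ?_
    obtain ⟨f, hf, rfl⟩ := P.extMk_surjective x (n + 2) rfl
    exact (P.extMk_eq_zero_iff f (n + 2) rfl hf n rfl).mpr (h f hf)

/-- Vanishing of `Ext^n_R(M, N)`, stated for unbundled modules and for Mathlib's derived-category
`Ext`, whose long exact sequences are available. -/
def ExtVanish (R : Type u) [Ring R] (M N : Type u) [AddCommGroup M] [Module R M]
    [AddCommGroup N] [Module R N] (n : ℕ) : Prop :=
  Subsingleton (Abelian.Ext.{u} (ModuleCat.of R M) (ModuleCat.of R N) n)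

theorem extV_succ_iff_extVanish {R : Type} [Ring R] (M N : ModuleCat.{0} R) (n : ℕ) :
    extV R M N (n + 1) ↔ ExtVanish R M N (n + 1) := by
  let P := projectiveResolution M
  rw [ExtVanish, subsingleton_ext_succ_iff P, extV,
    (P.isoExt (R := ℤ) (n + 1) N).toLinearEquiv.toEquiv.subsingleton_congr,
    ← ModuleCat.isZero_iff_subsingleton, ← HomologicalComplex.exactAt_iff_isZero_homology,
    HomologicalComplex.exactAt_iff' _ n (n + 1) (n + 2) (by simp) (by simp),
    ShortComplex.moduleCat_exact_iff]
  rfl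

end ExtComparison

section ExtVanish

variable {R : Type u} [Ring R] {A B C N : Type u} [AddCommGroup A] [Module R A]
  [AddCommGroup B] [Module R B] [AddCommGroup C] [Module R C] [AddCommGroup N] [Module R N]

theorem ExtVanish.of_retract (i : B →ₗ[R] A) (r : A →ₗ[R] B) (h : r ∘ₗ i = LinearMap.id) {n : ℕ}
    (hA : ExtVanish R A N n) : ExtVanish R B N n := by
  have hir : ModuleCat.ofHom i ≫ ModuleCat.ofHom r = 𝟙 _ := by
    rw [← ModuleCat.ofHom_comp, h, ModuleCat.ofHom_id]
  refine subsingleton_of_forall_eq 0 fun x => ?_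
  calc x = (Abelian.Ext.mk₀ (ModuleCat.ofHom i)).comp
        ((Abelian.Ext.mk₀ (ModuleCat.ofHom r)).comp x (zero_add n)) (zero_add n) := by
          rw [Abelian.Ext.mk₀_comp_mk₀_assoc, hir, Abelian.Ext.mk₀_id_comp]
    _ = 0 := by rw [hA.elim (Abelian.Ext.comp _ x _) 0, Abelian.Ext.comp_zero]

theorem ExtVanish.of_linearEquiv (e : A ≃ₗ[R] B) {n : ℕ} (h : ExtVanish R A N n) :
    ExtVanish R B N n :=
  h.of_retract e.symm.toLinearMap e.toLinearMap e.comp_symm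

theorem ExtVanish.of_projective [Module.Projective R A] (n : ℕ) : ExtVanish R A N (n + 1) :=
  have : Projective (ModuleCat.of R A) := (IsProjective.iff_projective A).mp inferInstance
  Abelian.Ext.subsingleton_of_projective _ _ n

theorem shortExact_moduleCat_of_exact {f : A →ₗ[R] B} {g : B →ₗ[R] C}
    (hfg : Function.Exact f g) (hf : Function.Injective f) (hg : Function.Surjective g) :
    (ShortComplex.mk (ModuleCat.ofHom f) (ModuleCat.ofHom g)
      (ModuleCat.hom_ext hfg.linearMap_comp_eq_zero)).ShortExact where
  exact := (ShortComplex.ShortExact.moduleCat_exact_iff_function_exact _).mpr hfg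
  mono_f := (ModuleCat.mono_iff_injective _).mpr hf
  epi_g := (ModuleCat.epi_iff_surjective _).mpr hg

variable {f : A →ₗ[R] B} {g : B →ₗ[R] C} {n : ℕ}

theorem ExtVanish.left_of_exact (hf : Function.Injective f) (hg : Function.Surjective g)
    (hfg : Function.Exact f g) (hB : ExtVanish R B N n) (hC : ExtVanish R C N (n + 1)) :
    ExtVanish R A N n := by
  refine subsingleton_of_forall_eq 0 fun x => ?_
  obtain ⟨y, rfl⟩ := Abelian.Ext.contravariant_sequence_exact₁
    (shortExact_moduleCat_of_exact hfg hf hg) _ x (add_comm 1 n) (hC.elim _ _)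
  rw [hB.elim y 0, Abelian.Ext.comp_zero]

theorem ExtVanish.middle_of_exact (hf : Function.Injective f) (hg : Function.Surjective g)
    (hfg : Function.Exact f g) (hA : ExtVanish R A N n) (hC : ExtVanish R C N n) :
    ExtVanish R B N n := by
  refine subsingleton_of_forall_eq 0 fun x => ?_
  obtain ⟨y, rfl⟩ := Abelian.Ext.contravariant_sequence_exact₂
    (shortExact_moduleCat_of_exact hfg hf hg) _ x (hA.elim _ _)
  rw [hC.elim y 0, Abelian.Ext.comp_zero]

theorem ExtVanish.right_of_exact (hf : Function.Injective f) (hg : Function.Surjective g)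
    (hfg : Function.Exact f g) (hA : ExtVanish R A N n) (hB : ExtVanish R B N (n + 1)) :
    ExtVanish R C N (n + 1) := by
  refine subsingleton_of_forall_eq 0 fun x => ?_
  obtain ⟨y, rfl⟩ := Abelian.Ext.contravariant_sequence_exact₃
    (shortExact_moduleCat_of_exact hfg hf hg) _ x (hB.elim _ _) (add_comm 1 n)
  rw [hA.elim y 0, Abelian.Ext.comp_zero]

theorem ExtVanish.one_of_forall_extend (hf : Function.Injective f) (hg : Function.Surjective g)
    (hfg : Function.Exact f g) (hext : ∀ u : A →ₗ[R] N, ∃ v : B →ₗ[R] N, v ∘ₗ f = u)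
    (hB : ExtVanish R B N 1) : ExtVanish R C N 1 := by
  have hS := shortExact_moduleCat_of_exact hfg hf hg
  refine subsingleton_of_forall_eq 0 fun x => ?_
  obtain ⟨y, rfl⟩ := Abelian.Ext.contravariant_sequence_exact₃ hS _ x (hB.elim _ _) (n₀ := 0) rfl
  obtain ⟨u, rfl⟩ := Abelian.Ext.homEquiv₀.symm.surjective y
  obtain ⟨v, hv⟩ := hext u.hom
  have hu : u = ModuleCat.ofHom f ≫ ModuleCat.ofHom v := ModuleCat.hom_ext hv.symm
  rw [hu, Abelian.Ext.homEquiv₀_symm_apply, ← Abelian.Ext.mk₀_comp_mk₀]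
  exact hS.extClass_comp_assoc _

theorem ExtVanish.exists_extend (hf : Function.Injective f) (hg : Function.Surjective g)
    (hfg : Function.Exact f g) (hC : ExtVanish R C N 1) (u : A →ₗ[R] N) :
    ∃ v : B →ₗ[R] N, v ∘ₗ f = u := by
  obtain ⟨y, hy⟩ := Abelian.Ext.contravariant_sequence_exact₁
    (shortExact_moduleCat_of_exact hfg hf hg) _ (Abelian.Ext.mk₀ (ModuleCat.ofHom u))
    (n₁ := 1) rfl (hC.elim _ _)
  obtain ⟨v, rfl⟩ := Abelian.Ext.homEquiv₀.symm.surjective y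
  rw [Abelian.Ext.homEquiv₀_symm_apply, Abelian.Ext.mk₀_comp_mk₀] at hy
  exact ⟨v.hom, congrArg ModuleCat.Hom.hom (Abelian.Ext.homEquiv₀.symm.injective hy)⟩

end ExtVanish

section DirectSum

open DirectSum

variable {R : Type u} [Ring R] {N : Type u} [AddCommGroup N] [Module R N]

section Presentation

variable {ι : Type u} {K F A : ι → Type u} [∀ i, AddCommGroup (K i)] [∀ i, Module R (K i)]
  [∀ i, AddCommGroup (F i)] [∀ i, Module R (F i)] [∀ i, AddCommGroup (A i)]
  [∀ i, Module R (A i)] {f : ∀ i, K i →ₗ[R] F i} {g : ∀ i, F i →ₗ[R] A i}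

theorem directSum_lmap_exact (h : ∀ i, Function.Exact (f i) (g i)) :
    Function.Exact (DirectSum.lmap f) (DirectSum.lmap g) := by
  classical
  rw [LinearMap.exact_iff, DirectSum.ker_lmap, DirectSum.range_lmap]
  simp only [fun i => (h i).linearMap_ker_eq]

variable [∀ i, Module.Projective R (F i)] (hf : ∀ i, Function.Injective (f i))
  (hg : ∀ i, Function.Surjective (g i)) (hfg : ∀ i, Function.Exact (f i) (g i))

include hf hg hfg

theorem ExtVanish.directSum_one_of_presentation (h : ∀ i, ExtVanish R (A i) N 1) :
    ExtVanish R (⨁ i, A i) N 1 := by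
  classical
  refine one_of_forall_extend ((DirectSum.lmap_injective f).mpr hf)
    ((DirectSum.lmap_surjective g).mpr hg) (directSum_lmap_exact hfg) (fun u => ?_)
    (of_projective 0)
  choose v hv using fun i =>
    (h i).exists_extend (hf i) (hg i) (hfg i) (u ∘ₗ DirectSum.lof R ι K i)
  refine ⟨DirectSum.toModule R ι N v, DirectSum.linearMap_ext R fun i => ?_⟩
  rw [← hv i]
  ext x
  simp

end Presentation

theorem ExtVanish.directSum {ι : Type u} (n : ℕ) (A : ι → Type u) [∀ i, AddCommGroup (A i)]
    [∀ i, Module R (A i)] (h : ∀ i, ExtVanish R (A i) N (n + 1)) :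
    ExtVanish R (⨁ i, A i) N (n + 1) := by
  let π (i : ι) : (A i →₀ R) →ₗ[R] A i := Finsupp.linearCombination R id
  have hπ (i : ι) : Function.Surjective (π i) := Finsupp.linearCombination_id_surjective R (A i)
  have hK (i : ι) : Function.Injective (π i).ker.subtype := (π i).ker.injective_subtype
  have hexact (i : ι) : Function.Exact (π i).ker.subtype (π i) := LinearMap.exact_subtype_ker_map _
  match n with
  | 0 => exact directSum_one_of_presentation (K := fun i => (π i).ker) hK hπ hexact h
  | n + 1 =>
    have hker := ExtVanish.directSum n (fun i => (π i).ker) fun i =>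
      (of_projective n).left_of_exact (hK i) (hπ i) (hexact i) (h i)
    exact hker.right_of_exact ((DirectSum.lmap_injective _).mpr hK)
      ((DirectSum.lmap_surjective _).mpr hπ) (directSum_lmap_exact hexact) (of_projective _)

theorem ExtVanish.finsupp {A : Type u} [AddCommGroup A] [Module R A] (ι : Type u) {n : ℕ}
    (h : ExtVanish R A N (n + 1)) : ExtVanish R (ι →₀ A) N (n + 1) := by
  classical
  exact (directSum n (fun _ : ι => A) fun _ => h).of_linearEquiv
    (finsuppLEquivDirectSum R A ι).symm

end DirectSum

section ExtVanishAbove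

/-- `Ext^i_R(M, N) = 0` for all `i > d`. -/
def ExtVanishAbove (R : Type u) [Ring R] (M N : Type u) [AddCommGroup M] [Module R M]
    [AddCommGroup N] [Module R N] (d : ℕ) : Prop :=
  ∀ i, d < i → ExtVanish R M N i

namespace ExtVanishAbove

variable {R : Type u} [Ring R] {A B C N : Type u} [AddCommGroup A] [Module R A]
  [AddCommGroup B] [Module R B] [AddCommGroup C] [Module R C] [AddCommGroup N] [Module R N]
  {f : A →ₗ[R] B} {g : B →ₗ[R] C} {d : ℕ}

theorem mono {e : ℕ} (hde : d ≤ e) (h : ExtVanishAbove R A N d) : ExtVanishAbove R A N e :=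
  fun i hi => h i (hde.trans_lt hi)

theorem of_retract (i : B →ₗ[R] A) (r : A →ₗ[R] B) (hri : r ∘ₗ i = LinearMap.id)
    (h : ExtVanishAbove R A N d) : ExtVanishAbove R B N d :=
  fun j hj => (h j hj).of_retract i r hri

theorem of_linearEquiv (e : A ≃ₗ[R] B) (h : ExtVanishAbove R A N d) : ExtVanishAbove R B N d :=
  fun i hi => (h i hi).of_linearEquiv e

theorem left_of_exact (hf : Function.Injective f) (hg : Function.Surjective g)
    (hfg : Function.Exact f g) (hB : ExtVanishAbove R B N d)
    (hC : ExtVanishAbove R C N (d + 1)) : ExtVanishAbove R A N d :=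
  fun i hi => (hB i hi).left_of_exact hf hg hfg (hC (i + 1) (Nat.succ_lt_succ hi))

theorem right_of_exact (hf : Function.Injective f) (hg : Function.Surjective g)
    (hfg : Function.Exact f g) (hA : ExtVanishAbove R A N d)
    (hB : ExtVanishAbove R B N (d + 1)) : ExtVanishAbove R C N (d + 1) := fun i hi => by
  obtain ⟨j, rfl⟩ := Nat.exists_eq_add_one.mpr (Nat.zero_lt_of_lt hi)
  exact (hA j (Nat.lt_of_succ_lt_succ hi)).right_of_exact hf hg hfg (hB _ hi)

theorem middle_of_exact (hf : Function.Injective f) (hg : Function.Surjective g)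
    (hfg : Function.Exact f g) (hA : ExtVanishAbove R A N d) (hC : ExtVanishAbove R C N d) :
    ExtVanishAbove R B N d :=
  fun i hi => (hA i hi).middle_of_exact hf hg hfg (hC i hi)

theorem finsupp (ι : Type u) (h : ExtVanishAbove R A N d) : ExtVanishAbove R (ι →₀ A) N d := by
  rintro (_ | i) hi
  · exact absurd hi (Nat.not_lt_zero d)
  · exact (h (i + 1) hi).finsupp ι

end ExtVanishAbove

end ExtVanishAbove

section FilteredColimit

open DirectSum

theorem isPureMono_ker_subtype {R A B : Type} [CommRing R] [AddCommGroup A] [Module R A]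
    [AddCommGroup B] [Module R B] (π : B →ₗ[R] A)
    (h : ∀ F : Finset π.ker, ∃ u : Module.End R B, π ∘ₗ u = π ∧ ∀ z ∈ F, u z = 0) :
    IsPureMono R π.ker.subtype := by
  classical
  refine ⟨π.ker.injective_subtype, fun Q _ _ => (injective_iff_map_eq_zero _).mpr fun t ht => ?_⟩
  obtain ⟨S, hS⟩ := TensorProduct.exists_finset t
  obtain ⟨u, hπu, hu⟩ := h (S.image Prod.snd)
  have hmem (b : B) : b - u b ∈ π.ker := by
    rw [LinearMap.mem_ker, map_sub, ← LinearMap.comp_apply, hπu, sub_self]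
  -- `1 - u` retracts `B` onto the kernel, as far as the finitely many entries of `t` can see.
  let r : B →ₗ[R] π.ker := LinearMap.codRestrict _ (LinearMap.id - u) hmem
  have hr : LinearMap.lTensor Q r (LinearMap.lTensor Q π.ker.subtype t) = t := by
    rw [hS, map_sum, map_sum]
    refine Finset.sum_congr rfl fun x hx => ?_
    have hrx : r x.2 = x.2 := Subtype.ext (by simp [r, hu x.2 (Finset.mem_image_of_mem _ hx)])
    rw [LinearMap.lTensor_tmul, LinearMap.lTensor_tmul, Submodule.subtype_apply, hrx]
  rw [← hr, ht, map_zero]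

variable {R : Type*} [Ring R]

theorem exists_end_forall_finset_eq_zero {A B : Type*} [AddCommGroup A] [Module R A]
    [AddCommGroup B] [Module R B] (π : B →ₗ[R] A)
    (h : ∀ z ∈ π.ker, ∃ u : Module.End R B, π ∘ₗ u = π ∧ u z = 0) (F : Finset π.ker) :
    ∃ u : Module.End R B, π ∘ₗ u = π ∧ ∀ z ∈ F, u z = 0 := by
  classical
  induction F using Finset.induction_on with
  | empty => exact ⟨LinearMap.id, rfl, by simp⟩
  | insert a F _ ih =>
    obtain ⟨u, hπu, hu⟩ := ih
    have hua : u a ∈ π.ker := by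
      rw [LinearMap.mem_ker, ← LinearMap.comp_apply, hπu, a.2]
    obtain ⟨w, hπw, hw⟩ := h (u a) hua
    refine ⟨w ∘ₗ u, by rw [← LinearMap.comp_assoc, hπw, hπu], fun z hz => ?_⟩
    obtain rfl | hz := Finset.mem_insert.mp hz
    · exact hw
    · rw [LinearMap.comp_apply, hu z hz, map_zero]

/-- The maps `m i : A i → L` exhibit `L` as a filtered colimit of the modules `A i`. The
transition maps are only required to exist, one at a time. -/
structure IsFilteredColimit {ι : Type*} {A : ι → Type*} {L : Type*} [∀ i, AddCommGroup (A i)]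
    [∀ i, Module R (A i)] [AddCommGroup L] [Module R L] (m : ∀ i, A i →ₗ[R] L) : Prop where
  surjective : ∀ x, ∃ i a, m i a = x
  directed : ∀ i j, ∃ k, (∃ u : A i →ₗ[R] A k, m k ∘ₗ u = m i) ∧
    ∃ u : A j →ₗ[R] A k, m k ∘ₗ u = m j
  eq_zero : ∀ i a, m i a = 0 → ∃ k, ∃ u : A i →ₗ[R] A k, m k ∘ₗ u = m i ∧ u a = 0

namespace IsFilteredColimit

section

variable {ι : Type*} {A : ι → Type*} {L : Type*} [∀ i, AddCommGroup (A i)]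
  [∀ i, Module R (A i)] [AddCommGroup L] [Module R L] {m : ∀ i, A i →ₗ[R] L}

theorem exists_forall_finset (hm : IsFilteredColimit m) (s : Finset ι) :
    ∃ k, ∀ i ∈ s, ∃ u : A i →ₗ[R] A k, m k ∘ₗ u = m i := by
  classical
  induction s using Finset.induction_on with
  | empty => exact ⟨(hm.surjective 0).choose, by simp⟩
  | insert i s _ ih =>
    obtain ⟨k, hk⟩ := ih
    obtain ⟨l, hil, u, hu⟩ := hm.directed i k
    refine ⟨l, fun j hj => ?_⟩
    obtain rfl | hj := Finset.mem_insert.mp hj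
    · exact hil
    · obtain ⟨v, hv⟩ := hk j hj
      exact ⟨u ∘ₗ v, by rw [← LinearMap.comp_assoc, hu, hv]⟩

variable [DecidableEq ι]

theorem toModule_surjective (hm : IsFilteredColimit m) :
    Function.Surjective (DirectSum.toModule R ι L m) := fun x => by
  obtain ⟨i, a, rfl⟩ := hm.surjective x
  exact ⟨DirectSum.lof R ι A i a, DirectSum.toModule_lof R i a⟩

theorem exists_end_eq_lof (hm : IsFilteredColimit m) (z : ⨁ i, A i) :
    ∃ u : Module.End R (⨁ i, A i), DirectSum.toModule R ι L m ∘ₗ u = DirectSum.toModule R ι L m ∧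
      ∃ k a, u z = DirectSum.lof R ι A k a := by
  classical
  obtain ⟨k, hk⟩ := hm.exists_forall_finset (DFinsupp.support z)
  have hv (i : ι) : ∃ v : A i →ₗ[R] ⨁ i, A i, DirectSum.toModule R ι L m ∘ₗ v = m i ∧
      (i ∈ DFinsupp.support z → ∀ a, v a ∈ (DirectSum.lof R ι A k).range) := by
    by_cases hi : i ∈ DFinsupp.support z
    · obtain ⟨u, hu⟩ := hk i hi
      refine ⟨DirectSum.lof R ι A k ∘ₗ u, ?_, fun _ a => ⟨u a, rfl⟩⟩
      ext a
      simp [← hu]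
    · exact ⟨DirectSum.lof R ι A i, by ext; simp, fun h => absurd h hi⟩
  choose v hπv hvk using hv
  refine ⟨DirectSum.toModule R ι _ v, DirectSum.linearMap_ext R fun i => ?_, ?_⟩
  · ext a
    simp [← hπv i]
  · have hz : DirectSum.toModule R ι _ v z ∈ (DirectSum.lof R ι A k).range := by
      rw [← DirectSum.sum_support_of z, map_sum]
      refine Submodule.sum_mem _ fun i hi => ?_
      rw [← DirectSum.lof_eq_of R, DirectSum.toModule_lof]
      exact hvk i hi _
    obtain ⟨a, ha⟩ := hz
    exact ⟨k, a, ha.symm⟩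

theorem exists_end_eq_zero (hm : IsFilteredColimit m) :
    ∀ z ∈ (DirectSum.toModule R ι L m).ker, ∃ u : Module.End R (⨁ i, A i),
      DirectSum.toModule R ι L m ∘ₗ u = DirectSum.toModule R ι L m ∧ u z = 0 := by
  intro z hz
  obtain ⟨u, hπu, k, a, hua⟩ := hm.exists_end_eq_lof z
  have ha : m k a = 0 := by
    rw [← DirectSum.toModule_lof R (φ := m) k a, ← hua, ← LinearMap.comp_apply, hπu, hz]
  obtain ⟨l, v, hv, hva⟩ := hm.eq_zero k a ha
  let w : Module.End R (⨁ i, A i) := DirectSum.toModule R ι _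
    (Function.update (DirectSum.lof R ι A) k (DirectSum.lof R ι A l ∘ₗ v))
  have hπw : DirectSum.toModule R ι L m ∘ₗ w = DirectSum.toModule R ι L m := by
    refine DirectSum.linearMap_ext R fun i => ?_
    ext b
    obtain rfl | hi := eq_or_ne i k
    · simp [w, ← hv]
    · simp [w, Function.update_of_ne hi]
  exact ⟨w ∘ₗ u, by rw [← LinearMap.comp_assoc, hπw, hπu], by simp [w, hua, hva]⟩

end

theorem extVanish_one {R : Type} [CommRing R] {ι : Type} {A : ι → Type} {L N : Type}
    [∀ i, AddCommGroup (A i)] [∀ i, Module R (A i)] [AddCommGroup L] [Module R L]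
    [AddCommGroup N] [Module R N] {m : ∀ i, A i →ₗ[R] L} (hm : IsFilteredColimit m)
    (hN : PureInjective R N) (hA : ∀ i, ExtVanish R (A i) N 1) : ExtVanish R L N 1 := by
  classical
  let π := DirectSum.toModule R ι L m
  refine .one_of_forall_extend π.ker.injective_subtype hm.toModule_surjective
    (LinearMap.exact_subtype_ker_map _) ?_ (.directSum 0 A hA)
  exact hN _ _ _ (isPureMono_ker_subtype π
    (exists_end_forall_finset_eq_zero π hm.exists_end_eq_zero))

theorem of_directed {ι L : Type*} [AddCommGroup L] [Module R L]
    {S : ι → Submodule R L} (hS : Directed (· ≤ ·) S) (htop : ∀ x, ∃ i, x ∈ S i) :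
    IsFilteredColimit fun i => (S i).subtype where
  surjective x := (htop x).imp fun _ hi => ⟨⟨x, hi⟩, rfl⟩
  directed i j := (hS i j).imp fun _ h =>
    ⟨⟨Submodule.inclusion h.1, rfl⟩, ⟨Submodule.inclusion h.2, rfl⟩⟩
  eq_zero i _ ha := ⟨i, LinearMap.id, rfl, Subtype.ext ha⟩

theorem divBy_comp_mkLinearMap {R A : Type*} [CommRing R] [AddCommGroup A] [Module R A]
    (S : Submonoid R) :
    IsFilteredColimit fun s : S => LocalizedModule.divBy s ∘ₗ LocalizedModule.mkLinearMap S A := by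
  have hm (s : S) (a : A) : (LocalizedModule.divBy s ∘ₗ LocalizedModule.mkLinearMap S A) a =
      LocalizedModule.mk a s := by
    rw [LinearMap.comp_apply, LocalizedModule.mkLinearMap_apply, LocalizedModule.divBy_apply,
      LocalizedModule.liftOn_mk, one_mul]
  have htrans (s t : S) : (LocalizedModule.divBy (t * s) ∘ₗ LocalizedModule.mkLinearMap S A) ∘ₗ
      LinearMap.lsmul R A t = LocalizedModule.divBy s ∘ₗ LocalizedModule.mkLinearMap S A := by
    ext a
    rw [LinearMap.comp_apply, hm, hm]
    exact LocalizedModule.mk_cancel_common_left t s a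
  refine ⟨fun x => ?_, fun s t => ⟨t * s, ⟨_, htrans s t⟩, ?_⟩, fun s a ha => ?_⟩
  · induction x with | _ a s
    exact ⟨s, a, hm s a⟩
  · rw [mul_comm t s]
    exact ⟨_, htrans t s⟩
  · rw [hm, ← LocalizedModule.zero_mk s, LocalizedModule.mk_eq] at ha
    obtain ⟨t, ht⟩ := ha
    refine ⟨t * s * s, _, htrans s (t * s), ?_⟩
    simpa [Submonoid.smul_def, mul_smul] using ht

end IsFilteredColimit

end FilteredColimit

section UniquelyDivisible

/-- `V` is uniquely divisible by `S`: every `s ∈ S` acts bijectively on `V`. For `S = R \ p` this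
says that `V` is an `R_p`-module, without introducing the ring `R_p`. -/
def IsUniquelyDivisible {R : Type*} [CommRing R] (S : Submonoid R) (V : Type*) [AddCommGroup V]
    [Module R V] : Prop :=
  ∀ s ∈ S, Function.Bijective fun v : V => s • v

namespace IsUniquelyDivisible

variable {R : Type*} [CommRing R] {S : Submonoid R} {U V W : Type*} [AddCommGroup U]
  [Module R U] [AddCommGroup V] [Module R V] [AddCommGroup W] [Module R W]

theorem eq_zero_of_smul (hV : IsUniquelyDivisible S V) {s : R} (hs : s ∈ S) {v : V}
    (h : s • v = 0) : v = 0 :=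
  (hV s hs).injective (h.trans (smul_zero s).symm)

variable (S) in
theorem localizedModule : IsUniquelyDivisible S (LocalizedModule S V) := fun s hs =>
  (Module.End.isUnit_iff _).mp
    (IsLocalizedModule.map_units (LocalizedModule.mkLinearMap S V) ⟨s, hs⟩)

theorem linearMap (hV : IsUniquelyDivisible S V) : IsUniquelyDivisible S (U →ₗ[R] V) := by
  intro s hs
  let e : V ≃ₗ[R] V := LinearEquiv.ofBijective (LinearMap.lsmul R V s) (hV s hs)
  have he : (fun φ : U →ₗ[R] V => s • φ) = e.congrRight := by
    ext φ u
    rfl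
  rw [he]
  exact (LinearEquiv.congrRight e).bijective

theorem of_exact {f : U →ₗ[R] V} {g : V →ₗ[R] W} (hfg : Function.Exact f g)
    (hg : Function.Surjective g) (hU : IsUniquelyDivisible S U) (hV : IsUniquelyDivisible S V) :
    IsUniquelyDivisible S W := by
  intro s hs
  constructor
  · refine (injective_iff_map_eq_zero (LinearMap.lsmul R W s)).mpr fun w hw => ?_
    obtain ⟨v, rfl⟩ := hg w
    obtain ⟨u, hu⟩ := (hfg (s • v)).mp ((g.map_smul s v).trans hw)
    obtain ⟨u, rfl⟩ := (hU s hs).surjective u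
    have huv : f u = v := (hV s hs).injective ((f.map_smul s u).symm.trans hu)
    rw [← huv, hfg.apply_apply_eq_zero]
  · intro w
    obtain ⟨v, rfl⟩ := hg w
    obtain ⟨v, rfl⟩ := (hV s hs).surjective v
    exact ⟨g v, (g.map_smul s v).symm⟩

theorem submodule (hV : IsUniquelyDivisible S V) (P : Submodule R V)
    (hP : ∀ s ∈ S, ∀ v, s • v ∈ P → v ∈ P) : IsUniquelyDivisible S P := by
  intro s hs
  refine ⟨fun x y hxy => Subtype.ext ((hV s hs).injective (congrArg Subtype.val hxy)),
    fun x => ?_⟩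
  obtain ⟨v, hv⟩ := (hV s hs).surjective x
  have hv : s • v = x := hv
  exact ⟨⟨v, hP s hs v (hv ▸ x.2)⟩, Subtype.ext hv⟩

theorem torsionBySet (hV : IsUniquelyDivisible S V) (T : Set R) :
    IsUniquelyDivisible S (Submodule.torsionBySet R V T) :=
  hV.submodule _ fun s hs v hsv => (Submodule.mem_torsionBySet_iff _ _).mpr fun a =>
    hV.eq_zero_of_smul hs <| by
      rw [smul_comm]
      exact (Submodule.mem_torsionBySet_iff _ _).mp hsv a

theorem isLocalizedModule_id (hV : IsUniquelyDivisible S V) :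
    IsLocalizedModule S (LinearMap.id : V →ₗ[R] V) where
  map_units s := (Module.End.isUnit_iff _).mpr (hV s s.2)
  surj v := ⟨(v, 1), one_smul _ _⟩
  exists_of_eq h := ⟨1, congrArg _ h⟩

end IsUniquelyDivisible

end UniquelyDivisible

section ResidueField

theorem exists_linearEquiv_finsupp_fractionRing {A V : Type*} (κ : Type*) [CommRing A] [Field κ]
    [Algebra A κ] [IsFractionRing A κ] [AddCommGroup V] [Module A V]
    (hV : IsUniquelyDivisible (nonZeroDivisors A) V) :
    ∃ ι : Set (TensorProduct A κ V), Nonempty (V ≃ₗ[A] ι →₀ κ) := by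
  have := hV.isLocalizedModule_id
  obtain ⟨ι, ⟨b⟩⟩ := Module.Basis.exists_basis κ (TensorProduct A κ V)
  exact ⟨ι, ⟨IsLocalizedModule.linearEquiv (nonZeroDivisors A) LinearMap.id
    (TensorProduct.mk A κ V 1) ≪≫ₗ b.repr.restrictScalars A⟩⟩

theorem exists_linearEquiv_finsupp_residueField {R V : Type u} [CommRing R] [AddCommGroup V]
    [Module R V] (p : Ideal R) [p.IsPrime] (hV : IsUniquelyDivisible p.primeCompl V)
    (hp : Module.IsTorsionBySet R V p) :
    ∃ ι : Type u, Nonempty (V ≃ₗ[R] ι →₀ p.ResidueField) := by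
  let _ : Module (R ⧸ p) V := hp.module
  have hV' : IsUniquelyDivisible (nonZeroDivisors (R ⧸ p)) V := by
    intro a ha
    obtain ⟨s, rfl⟩ := Ideal.Quotient.mk_surjective a
    exact hV s fun hs => nonZeroDivisors.ne_zero ha (Ideal.Quotient.eq_zero_iff_mem.mpr hs)
  obtain ⟨ι, ⟨e⟩⟩ := exists_linearEquiv_finsupp_fractionRing p.ResidueField hV'
  have : IsScalarTower R (R ⧸ p) V := hp.isScalarTower
  exact ⟨ι, ⟨e.restrictScalars R⟩⟩

theorem ExtVanishAbove.of_isUniquelyDivisible_of_isTorsionBySet {R V N : Type u} [CommRing R]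
    [AddCommGroup V] [Module R V] [AddCommGroup N] [Module R N] {p : Ideal R} [p.IsPrime] {d : ℕ}
    (hκ : ExtVanishAbove R p.ResidueField N d) (hV : IsUniquelyDivisible p.primeCompl V)
    (hp : Module.IsTorsionBySet R V p) : ExtVanishAbove R V N d := by
  obtain ⟨ι, ⟨e⟩⟩ := exists_linearEquiv_finsupp_residueField p hV hp
  exact (hκ.finsupp ι).of_linearEquiv e.symm

end ResidueField

section PowerTorsion

theorem ExtVanishAbove.of_isTorsionBySet_pow {R V N : Type u} [CommRing R] [AddCommGroup V]
    [Module R V] [AddCommGroup N] [Module R N] {p : Ideal R} [p.IsPrime] {d : ℕ}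
    (hκ : ExtVanishAbove R p.ResidueField N d) (hV : IsUniquelyDivisible p.primeCompl V) (n : ℕ)
    (hp : Module.IsTorsionBySet R V ↑(p ^ n)) : ExtVanishAbove R V N d := by
  induction n generalizing V with
  | zero =>
    refine hκ.of_isUniquelyDivisible_of_isTorsionBySet hV fun v a => ?_
    exact hp (a := ⟨a, by simp⟩)
  | succ n ih =>
    let U := Submodule.torsionBySet R V ↑(p ^ n)
    have hU : IsUniquelyDivisible p.primeCompl U := hV.torsionBySet _
    have hquot : Module.IsTorsionBySet R (V ⧸ U) p := by
      intro w a
      obtain ⟨v, rfl⟩ := U.mkQ_surjective w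
      refine (Submodule.Quotient.mk_eq_zero U).mpr
        ((Submodule.mem_torsionBySet_iff _ _).mpr fun b => ?_)
      rw [smul_smul]
      exact hp (a := ⟨b * a, pow_succ p n ▸ Ideal.mul_mem_mul b.2 a.2⟩)
    have hexact := LinearMap.exact_subtype_mkQ U
    exact (ih hU (Submodule.torsionBySet_isTorsionBySet _)).middle_of_exact U.injective_subtype
      U.mkQ_surjective hexact (hκ.of_isUniquelyDivisible_of_isTorsionBySet
        (hU.of_exact hexact U.mkQ_surjective hV) hquot)

theorem extVanish_one_of_forall_mem_torsionBySet_pow {R V N : Type} [CommRing R] [AddCommGroup V]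
    [Module R V] [AddCommGroup N] [Module R N] {p : Ideal R} [p.IsPrime]
    (hN : PureInjective R N) (hκ : ExtVanishAbove R p.ResidueField N 0)
    (hV : IsUniquelyDivisible p.primeCompl V)
    (hp : ∀ v : V, ∃ n, v ∈ Submodule.torsionBySet R V ↑(p ^ n)) : ExtVanish R V N 1 := by
  have hmono : Monotone fun n => Submodule.torsionBySet R V ↑(p ^ n) := fun m n hmn =>
    Submodule.torsionBySet_le_torsionBySet_of_subset (Ideal.pow_le_pow_right hmn)
  exact (IsFilteredColimit.of_directed hmono.directed_le hp).extVanish_one hN fun n =>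
    hκ.of_isTorsionBySet_pow (hV.torsionBySet _) n (Submodule.torsionBySet_isTorsionBySet _) 1
      Nat.one_pos

end PowerTorsion

section Descent

/-- Multiplication by `a` on `K` factors through a finite free module, i.e. it vanishes in the
stable module category. The finite modules `K` on which all elements of a prime `p` act in this way
include `R ⧸ p` and are closed under syzygies, which drives the descending induction below. -/
def SMulFactorsThroughFree {R : Type*} [CommRing R] (a : R) (K : Type*) [AddCommGroup K]
    [Module R K] : Prop :=
  ∃ (m : ℕ) (α : K →ₗ[R] Fin m → R) (β : (Fin m → R) →ₗ[R] K), ∀ k, β (α k) = a • k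

section Syzygy

variable {R K F X : Type*} [CommRing R] [AddCommGroup K] [Module R K] [AddCommGroup F] [Module R F]
  [AddCommGroup X] [Module R X] {a : R} {π : F →ₗ[R] K}

theorem SMulFactorsThroughFree.exists_extend_ker (ha : SMulFactorsThroughFree a K)
    (hπ : Function.Surjective π) : ∃ γ : F →ₗ[R] π.ker, ∀ k : π.ker, γ k = a • k := by
  obtain ⟨m, α, β, hβα⟩ := ha
  obtain ⟨β', hβ'⟩ := Module.projective_lifting_property π β hπ
  refine ⟨LinearMap.codRestrict _ (a • LinearMap.id - β' ∘ₗ α ∘ₗ π) fun x => ?_,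
    fun k => Subtype.ext (by simp)⟩
  have hπβ' : π (β' (α (π x))) = a • π x := by
    rw [← LinearMap.comp_apply, hβ', hβα]
  simp [hπβ']

theorem smulFactorsThroughFree_of_isTorsionBySet {I : Ideal R} (hK : Module.IsTorsionBySet R K I)
    (ha : a ∈ I) : SMulFactorsThroughFree a K :=
  ⟨0, 0, 0, fun k => (hK (x := k) (a := ⟨a, ha⟩)).symm⟩

theorem isTorsionBySet_quotient_range_lcomp {I : Ideal R}
    (hK : ∀ a ∈ I, SMulFactorsThroughFree a K) (hπ : Function.Surjective π) :
    Module.IsTorsionBySet R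
      ((π.ker →ₗ[R] X) ⧸ (LinearMap.lcomp R X π.ker.subtype).range) I := by
  rintro v ⟨a, ha⟩
  obtain ⟨φ, rfl⟩ := Submodule.mkQ_surjective _ v
  obtain ⟨γ, hγ⟩ := (hK a ha).exists_extend_ker hπ
  refine (Submodule.Quotient.mk_eq_zero _).mpr ⟨φ ∘ₗ γ, ?_⟩
  ext k
  simp [hγ]

end Syzygy

variable {R N X : Type u} [CommRing R] [AddCommGroup N] [Module R N] [AddCommGroup X] [Module R X]

theorem ExtVanishAbove.linearMap_fin_fun {d : ℕ} (hX : ExtVanishAbove R X N d) (m : ℕ) :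
    ExtVanishAbove R ((Fin m → R) →ₗ[R] X) N d :=
  (hX.finsupp (ULift (Fin m))).of_linearEquiv
    (Finsupp.linearEquivFunOnFinite R X (ULift (Fin m)) ≪≫ₗ
      LinearEquiv.funCongrLeft R X Equiv.ulift.symm ≪≫ₗ (Pi.basisFun R (Fin m)).constr R)

variable {p : Ideal R} [p.IsPrime]

theorem ExtVanishAbove.residueField_of_nontrivial {V : Type u} [AddCommGroup V] [Module R V]
    [Nontrivial V] {d : ℕ} (hV : ExtVanishAbove R V N d)
    (hVp : IsUniquelyDivisible p.primeCompl V) (hp : Module.IsTorsionBySet R V p) :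
    ExtVanishAbove R p.ResidueField N d := by
  classical
  obtain ⟨ι, ⟨e⟩⟩ := exists_linearEquiv_finsupp_residueField p hVp hp
  have : Nontrivial (ι →₀ p.ResidueField) := e.symm.toEquiv.nontrivial
  obtain ⟨i⟩ : Nonempty ι := by
    by_contra hι
    rw [not_nonempty_iff] at hι
    exact not_subsingleton (ι →₀ p.ResidueField) inferInstance
  exact (hV.of_linearEquiv e).of_retract (Finsupp.lsingle i) (Finsupp.lapply i)
    (LinearMap.ext fun x => Finsupp.single_eq_same)

theorem isTorsionBySet_quotient_self (I : Ideal R) : Module.IsTorsionBySet R (R ⧸ I) I :=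
  (Module.isTorsionBySet_iff_subset_annihilator R (R ⧸ I)).mpr Ideal.annihilator_quotient.ge

theorem extVanishAbove_residueField_of_linearMap [IsNoetherianRing R] {d : ℕ}
    (hpX : p ∈ associatedPrimes R X) (hXp : IsUniquelyDivisible p.primeCompl X)
    (h : ExtVanishAbove R ((R ⧸ p) →ₗ[R] X) N d) : ExtVanishAbove R p.ResidueField N d := by
  obtain ⟨-, f, hf⟩ := (isAssociatedPrime_iff_exists_injective_linearMap p X).mp hpX
  have : Nontrivial ((R ⧸ p) →ₗ[R] X) :=
    ⟨f, 0, fun h => one_ne_zero (hf (by rw [h, LinearMap.zero_apply, LinearMap.zero_apply]))⟩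
  refine h.residueField_of_nontrivial hXp.linearMap fun φ a => LinearMap.ext fun y => ?_
  rw [LinearMap.smul_apply, ← map_smul, isTorsionBySet_quotient_self p, map_zero,
    LinearMap.zero_apply]

-- With `π : R^m → K` onto and `Q` the cokernel of `X^m → Hom(ker π, X)`, the sequence
-- `0 → Hom(K, X) → X^m → Hom(ker π, X) → Q → 0` is exact and `Q` is a `k(p)`-vector space.
theorem extVanishAbove_linearMap_of_succ {d : ℕ} (hX : ExtVanishAbove R X N d)
    (hXp : IsUniquelyDivisible p.primeCompl X) (hκ : ExtVanishAbove R p.ResidueField N (d + 1))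
    (K : Type u) [AddCommGroup K] [Module R K] [Module.Finite R K]
    (hK : ∀ a ∈ p, SMulFactorsThroughFree a K)
    (hsyz : ∀ (m : ℕ) (π : (Fin m → R) →ₗ[R] K), Function.Surjective π →
      ExtVanishAbove R (π.ker →ₗ[R] X) N (d + 1)) : ExtVanishAbove R (K →ₗ[R] X) N d := by
  obtain ⟨m, π, hπ⟩ := Module.Finite.exists_fin' R K
  let ρ := LinearMap.lcomp R X π.ker.subtype
  have hquot : ExtVanishAbove R ((π.ker →ₗ[R] X) ⧸ ρ.range) N (d + 2) :=
    (hκ.of_isUniquelyDivisible_of_isTorsionBySet (hXp.linearMap.of_exact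
      (LinearMap.exact_map_mkQ_range ρ) ρ.range.mkQ_surjective hXp.linearMap)
      (isTorsionBySet_quotient_range_lcomp hK hπ)).mono (Nat.le_succ _)
  have hrange : ExtVanishAbove R ρ.range N (d + 1) := (hsyz m π hπ).left_of_exact
    ρ.range.injective_subtype ρ.range.mkQ_surjective (LinearMap.exact_subtype_mkQ _) hquot
  have hexact : Function.Exact (LinearMap.lcomp R X π) ρ :=
    LinearMap.exact_lcomp_of_exact_of_surjective X (LinearMap.exact_subtype_ker_map π) hπ
  exact (hX.linearMap_fin_fun m).left_of_exact (f := LinearMap.lcomp R X π)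
    (LinearMap.lcomp_injective_of_surjective π hπ) ρ.surjective_rangeRestrict
    (fun φ => Subtype.ext_iff.trans (hexact φ)) hrange

theorem extVanishAbove_residueField_of_forall_linearMap [IsNoetherianRing R]
    (hX : ExtVanishAbove R X N 0) (hpX : p ∈ associatedPrimes R X)
    (hXp : IsUniquelyDivisible p.primeCompl X) (n : ℕ)
    (hHom : ∀ (K : Type u) [AddCommGroup K] [Module R K] [Module.Finite R K],
      (∀ a ∈ p, SMulFactorsThroughFree a K) → ExtVanishAbove R (K →ₗ[R] X) N n) :
    ExtVanishAbove R p.ResidueField N 0 := by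
  have hκ {d : ℕ} (hHom : ∀ (K : Type u) [AddCommGroup K] [Module R K] [Module.Finite R K],
      (∀ a ∈ p, SMulFactorsThroughFree a K) → ExtVanishAbove R (K →ₗ[R] X) N d) :
      ExtVanishAbove R p.ResidueField N d :=
    extVanishAbove_residueField_of_linearMap hpX hXp <| hHom (R ⧸ p) fun a ha =>
      smulFactorsThroughFree_of_isTorsionBySet (isTorsionBySet_quotient_self p) ha
  induction n with
  | zero => exact hκ hHom
  | succ d ih =>
    refine ih fun K _ _ _ hK => extVanishAbove_linearMap_of_succ (hX.mono d.zero_le) hXp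
      (hκ hHom) K hK fun m π hπ => hHom π.ker fun a ha => ?_
    obtain ⟨γ, hγ⟩ := (hK a ha).exists_extend_ker hπ
    exact ⟨m, π.ker.subtype, γ, hγ⟩

theorem extVanishAbove_residueField_of_isUniquelyDivisible [IsNoetherianRing R] {n : ℕ}
    (hN : ∀ (A : Type u) [AddCommGroup A] [Module R A], ExtVanishAbove R A N n)
    (hX : ExtVanishAbove R X N 0) (hpX : p ∈ associatedPrimes R X)
    (hXp : IsUniquelyDivisible p.primeCompl X) : ExtVanishAbove R p.ResidueField N 0 :=
  extVanishAbove_residueField_of_forall_linearMap hX hpX hXp n fun K _ _ _ _ => hN (K →ₗ[R] X)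

end Descent

section Injective

variable {R : Type*} [Ring R] {A B E : Type u} [AddCommGroup A] [Module R A] [AddCommGroup B]
  [Module R B] [AddCommGroup E] [Module R E]

theorem injective_of_retract [Module.Injective R A] (i : B →ₗ[R] A) (r : A →ₗ[R] B)
    (h : r ∘ₗ i = LinearMap.id) : Module.Injective R B := by
  refine ⟨fun X Y _ _ _ _ f hf g => ?_⟩
  obtain ⟨k, hk⟩ := Module.Injective.out f hf (i ∘ₗ g)
  refine ⟨r ∘ₗ k, fun x => ?_⟩
  rw [LinearMap.comp_apply, hk]
  exact LinearMap.congr_fun h (g x)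

theorem injective_prod [Module.Injective R A] [Module.Injective R B] :
    Module.Injective R (A × B) := by
  refine ⟨fun X Y _ _ _ _ f hf g => ?_⟩
  obtain ⟨k, hk⟩ := Module.Injective.out f hf (LinearMap.fst R A B ∘ₗ g)
  obtain ⟨l, hl⟩ := Module.Injective.out f hf (LinearMap.snd R A B ∘ₗ g)
  exact ⟨k.prod l, fun x => Prod.ext (hk x) (hl x)⟩

theorem exists_isCompl_of_injective (T : Submodule R E) [Module.Injective R T] :
    ∃ K : Submodule R E, IsCompl T K :=
  have ⟨ρ, hρ⟩ := Module.Injective.out T.subtype T.injective_subtype LinearMap.id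
  ⟨ρ.ker, LinearMap.isCompl_of_proj hρ⟩

theorem coprod_subtype_injective {S T : Submodule R E} (h : Disjoint S T) :
    Function.Injective (S.subtype.coprod T.subtype) := by
  rw [← LinearMap.ker_eq_bot, LinearMap.ker_coprod_of_disjoint_range _ _ (by simpa using h),
    Submodule.ker_subtype, Submodule.ker_subtype, Submodule.prod_bot]

theorem nonempty_linearEquiv_prod_sup {S T : Submodule R E} (h : Disjoint S T) :
    Nonempty ((S × T) ≃ₗ[R] ↥(S ⊔ T)) :=
  ⟨LinearEquiv.ofInjective _ (coprod_subtype_injective h) ≪≫ₗ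
    LinearEquiv.ofEq _ _ (Submodule.sup_eq_range S T).symm⟩

theorem injective_sup_of_disjoint {S T : Submodule R E} [Module.Injective R S]
    [Module.Injective R T] (h : Disjoint S T) : Module.Injective R ↥(S ⊔ T) := by
  obtain ⟨e⟩ := nonempty_linearEquiv_prod_sup h
  have : Module.Injective R (S × T) := injective_prod
  exact injective_of_retract e.symm.toLinearMap e.toLinearMap e.comp_symm

theorem injective_sSup_of_directedOn {R : Type u} [Ring R] [Module R E] [IsNoetherianRing R]
    {c : Set (Submodule R E)} (hne : c.Nonempty) (hc : DirectedOn (· ≤ ·) c)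
    (h : ∀ T ∈ c, Module.Injective R T) : Module.Injective R ↥(sSup c) := by
  refine Module.Baer.injective fun I g => ?_
  have hfg : ((sSup c).subtype ∘ₗ g).range.FG := by
    rw [LinearMap.range_eq_map]
    exact Module.Finite.fg_top.map _
  obtain ⟨T, hT, hle⟩ := (Submodule.fg_iff_compact _).mp hfg c _ hne hc (isLUB_sSup c)
    (by rintro _ ⟨x, rfl⟩; exact (g x).2)
  obtain ⟨g', hg'⟩ := Module.Baer.of_injective (h T hT) I
    (((sSup c).subtype ∘ₗ g).codRestrict T fun x => hle ⟨x, rfl⟩)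
  exact ⟨Submodule.inclusion (le_sSup hT) ∘ₗ g', fun x hx =>
    Subtype.ext (congrArg Subtype.val (hg' x hx) :)⟩

end Injective

section Envelope

theorem exists_maximal_disjoint {α : Type*} [CompleteLattice α] [IsCompactlyGenerated α] {a b : α}
    (h : Disjoint a b) : ∃ c, a ≤ c ∧ Maximal (Disjoint · b) c := by
  refine zorn_le_nonempty₀ {c | Disjoint c b}
    (fun s hs hchain y _ => ⟨sSup s, ?_, fun _ => le_sSup⟩) a h
  exact hchain.directedOn.disjoint_sSup_left.mpr fun _ hz => hs hz

theorem eq_bot_of_disjoint_of_maximal_disjoint {α : Type*} [Lattice α] [OrderBot α]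
    [IsModularLattice α] {s t x k : α} (hst : s ≤ t) (htx : Disjoint t x)
    (hx : Maximal (Disjoint · s) x) (hkt : k ≤ t) (hks : Disjoint k s) : k = ⊥ := by
  have hxks : Disjoint (x ⊔ k) s :=
    hks.disjoint_sup_left_of_disjoint_sup_right (htx.symm.mono_right (sup_le hkt hst))
  exact disjoint_self.mp (htx.mono hkt (le_sup_right.trans (hx.le_of_ge hxks le_sup_left)))

variable {R : Type*} [Ring R] {E : Type u} [AddCommGroup E] [Module R E]

theorem injective_of_maximal_disjoint [Module.Injective R E] {T X : Submodule R E}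
    (hT : Maximal (Disjoint · X) T) (hX : Maximal (Disjoint · T) X) : Module.Injective R T := by
  obtain ⟨r, hr⟩ := Module.Injective.out (Q := E) _
    (coprod_subtype_injective hT.prop) (T.subtype ∘ₗ LinearMap.fst R T X)
  have hrT (t) (ht : t ∈ T) : r t = t := by simpa using hr (⟨t, ht⟩, 0)
  have hrX (x) (hx : x ∈ X) : r x = 0 := by simpa using hr (0, ⟨x, hx⟩)
  have hcomap : X.comap r ≤ X := by
    refine hX.le_of_ge ?_ fun x hx => ?_
    · refine Submodule.disjoint_def.mpr fun t htX ht => ?_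
      rw [Submodule.mem_comap, hrT t ht] at htX
      exact Submodule.disjoint_def.mp hT.prop t ht htX
    · simp [hrX x hx]
  have hrange : r.range ≤ T := by
    refine hT.le_of_ge (Submodule.disjoint_def.mpr ?_) fun t ht => ⟨t, hrT t ht⟩
    rintro _ ⟨z, rfl⟩ hz
    exact hrX z (hcomap hz)
  exact injective_of_retract T.subtype (r.codRestrict T fun z => hrange ⟨z, rfl⟩)
    (LinearMap.ext fun t => Subtype.ext (hrT t t.2))

end Envelope

namespace IsInjectiveEnvelope

theorem exists_inclusion {R E : Type} [Ring R] [AddCommGroup E] [Module R E] [Module.Injective R E]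
    (S : Submodule R E) :
    ∃ (T : Submodule R E) (h : S ≤ T), IsInjectiveEnvelope R (Submodule.inclusion h) := by
  obtain ⟨X, -, hX⟩ := exists_maximal_disjoint (disjoint_bot_left (a := S))
  obtain ⟨T, hST, hT⟩ := exists_maximal_disjoint hX.prop.symm
  have hXT : Maximal (Disjoint · T) X :=
    ⟨hT.prop.symm, fun Y hY => hX.le_of_ge (hY.mono_right hST)⟩
  refine ⟨T, hST, injective_of_maximal_disjoint hT hXT, Submodule.inclusion_injective hST,
    fun K hK hKS => hK ?_⟩
  have hdisj : Disjoint (K.map T.subtype) S := by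
    have := Submodule.disjoint_map T.injective_subtype (disjoint_iff.mpr hKS)
    rwa [Submodule.range_inclusion, Submodule.map_comap_subtype, inf_eq_right.mpr hST] at this
  refine Submodule.map_injective_of_injective T.injective_subtype ?_
  rw [Submodule.map_bot]
  exact eq_bot_of_disjoint_of_maximal_disjoint hST hT.prop hX (Submodule.map_subtype_le T K) hdisj

theorem disjoint_of_disjoint {R E : Type} [Ring R] [AddCommGroup E] [Module R E]
    {S T U : Submodule R E} {h : S ≤ T} (hT : IsInjectiveEnvelope R (Submodule.inclusion h))
    (hSU : Disjoint S U) : Disjoint T U := by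
  rw [Submodule.disjoint_iff_comap_eq_bot]
  by_contra hU
  refine hT.2.2 _ hU ?_
  rw [Submodule.range_inclusion, ← Submodule.comap_inf, inf_comm, hSU.eq_bot, Submodule.comap_bot,
    Submodule.ker_subtype]

variable {R M E : Type} [CommRing R] [IsNoetherianRing R] [AddCommGroup M] [Module R M]
  [AddCommGroup E] [Module R E] {f : M →ₗ[R] E}

theorem associatedPrimes_subset (hf : IsInjectiveEnvelope R f) :
    associatedPrimes R E ⊆ associatedPrimes R M := by
  intro q hq
  have hqp := hq.isPrime
  obtain ⟨-, φ, hφ⟩ := (isAssociatedPrime_iff_exists_injective_linearMap q E).mp hq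
  have hφ0 : φ.range ≠ ⊥ := by
    rw [← Submodule.nontrivial_iff_ne_bot]
    exact (LinearEquiv.ofInjective φ hφ).symm.toEquiv.nontrivial
  have : Nontrivial ↥(φ.range ⊓ f.range) :=
    (Submodule.nontrivial_iff_ne_bot).mpr (hf.2.2 _ hφ0)
  obtain ⟨q', hq'⟩ := associatedPrimes.nonempty R ↥(φ.range ⊓ f.range)
  have hqq' : q' ∈ associatedPrimes R (R ⧸ q) := by
    rw [LinearEquiv.AssociatedPrimes.eq (LinearEquiv.ofInjective φ hφ)]
    exact associatedPrimes.subset_of_injective (Submodule.inclusion_injective inf_le_left) hq'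
  rw [associatedPrimes.eq_singleton_of_isPrimary hqp.isPrimary, hqp.radical,
    Set.mem_singleton_iff] at hqq'
  rw [LinearEquiv.AssociatedPrimes.eq (LinearEquiv.ofInjective f hf.2.1), ← hqq']
  exact associatedPrimes.subset_of_injective (Submodule.inclusion_injective inf_le_right) hq'

end IsInjectiveEnvelope

section AssociatedPrimes

variable {R : Type u} [CommRing R] [IsNoetherianRing R] {T : Type*} [AddCommGroup T] [Module R T]
  {q : Ideal R}

theorem injective_smul_of_associatedPrimes_subset (hq : associatedPrimes R T ⊆ {q}) {s : R}
    (hs : s ∉ q) : Function.Injective fun t : T => s • t := by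
  refine (injective_iff_map_eq_zero (LinearMap.lsmul R T s)).mpr fun t ht => ?_
  by_contra ht0
  have hmem : s ∈ ⋃ p ∈ associatedPrimes R T, (p : Set R) := by
    rw [biUnion_associatedPrimes_eq_zero_divisors]
    exact ⟨t, ht0, ht⟩
  obtain ⟨p, hp, hsp⟩ := Set.mem_iUnion₂.mp hmem
  exact hs (hq hp ▸ hsp)

theorem le_radical_annihilator_of_associatedPrimes_subset [Module.Finite R T]
    (hq : associatedPrimes R T ⊆ {q}) : q ≤ (Module.annihilator R T).radical := by
  rw [← Ideal.sInf_minimalPrimes]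
  refine le_sInf fun p hp => ?_
  have := Module.associatedPrimes.minimalPrimes_annihilator_subset_associatedPrimes R T hp
  exact (hq this).ge

theorem exists_mem_torsionBySet_pow_of_associatedPrimes_subset
    (hq : associatedPrimes R T ⊆ {q}) (t : T) :
    ∃ n, t ∈ Submodule.torsionBySet R T ↑(q ^ n) := by
  let S := Submodule.span R {t}
  obtain ⟨n, hn⟩ := Ideal.exists_pow_le_of_le_radical_of_fg
    (le_radical_annihilator_of_associatedPrimes_subset
      ((associatedPrimes.subset_of_injective S.injective_subtype).trans hq))
    (IsNoetherian.noetherian q)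
  refine ⟨n, (Submodule.mem_torsionBySet_iff _ _).mpr fun a => ?_⟩
  exact congrArg Subtype.val
    (Module.mem_annihilator.mp (hn a.2) ⟨t, Submodule.mem_span_singleton_self t⟩)

theorem isUniquelyDivisible_of_injective {T : Type u} [AddCommGroup T] [Module R T] [q.IsPrime]
    [Module.Injective R T] (hq : associatedPrimes R T ⊆ {q}) :
    IsUniquelyDivisible q.primeCompl T := by
  intro s hs
  have hinj := injective_smul_of_associatedPrimes_subset hq hs
  obtain ⟨ρ, hρ⟩ := Module.Injective.out (LinearMap.lsmul R T s) hinj LinearMap.id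
  exact ⟨hinj, fun t => ⟨ρ t, (map_smul ρ s t).symm.trans (hρ t)⟩⟩

end AssociatedPrimes

section InjectiveModule

theorem ExtVanish.sup_of_disjoint {R E N : Type u} [Ring R] [AddCommGroup E] [Module R E]
    [AddCommGroup N] [Module R N] {S T : Submodule R E} (h : Disjoint S T) {n : ℕ}
    (hS : ExtVanish R S N n) (hT : ExtVanish R T N n) : ExtVanish R ↥(S ⊔ T) N n := by
  obtain ⟨e⟩ := nonempty_linearEquiv_prod_sup h
  exact (hS.middle_of_exact LinearMap.inl_injective LinearMap.snd_surjective .inl_snd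
    hT).of_linearEquiv e

variable {R E N : Type} [CommRing R] [AddCommGroup E] [Module R E] [AddCommGroup N] [Module R N]

theorem ExtVanish.sSup_of_directedOn (hN : PureInjective R N) {c : Set (Submodule R E)}
    (hne : c.Nonempty) (hc : DirectedOn (· ≤ ·) c) (h : ∀ T ∈ c, ExtVanish R T N 1) :
    ExtVanish R ↥(sSup c) N 1 := by
  refine (IsFilteredColimit.of_directed (S := fun T : c => T.1.comap (sSup c).subtype)
    (fun T U => ?_) fun x => ?_).extVanish_one hN fun T => ?_
  · obtain ⟨V, hV, hTV, hUV⟩ := hc T T.2 U U.2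
    exact ⟨⟨V, hV⟩, Submodule.comap_mono hTV, Submodule.comap_mono hUV⟩
  · obtain ⟨T, hT, hx⟩ := (Submodule.mem_sSup_of_directed hne hc).mp x.2
    exact ⟨⟨T, hT⟩, hx⟩
  · exact (h T T.2).of_linearEquiv (Submodule.comapSubtypeEquivOfLe (le_sSup T.2)).symm

variable [IsNoetherianRing R]

theorem exists_maximal_injective_extVanish (hN : PureInjective R N) :
    ∃ T : Submodule R E,
      Maximal (fun T : Submodule R E => Module.Injective R T ∧ ExtVanish R T N 1) T := by
  have hbot : Module.Injective R (⊥ : Submodule R E) :=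
    ⟨fun _ _ _ _ _ _ _ _ _ => ⟨0, fun _ => Subsingleton.elim _ _⟩⟩
  obtain ⟨T, -, hT⟩ := zorn_le_nonempty₀
    {T : Submodule R E | Module.Injective R T ∧ ExtVanish R T N 1}
    (fun c hc hchain y hy =>
      ⟨sSup c,
        ⟨injective_sSup_of_directedOn ⟨y, hy⟩ hchain.directedOn fun T hT => (hc hT).1,
          .sSup_of_directedOn hN ⟨y, hy⟩ hchain.directedOn fun T hT => (hc hT).2⟩,
        fun _ => le_sSup⟩)
    ⊥ ⟨hbot, .of_projective 0⟩
  exact ⟨T, hT⟩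

theorem exists_disjoint_injective_of_ne_top [Module.Injective R E] {S : Submodule R E}
    [Module.Injective R S] (hS : S ≠ ⊤) : ∃ q ∈ associatedPrimes R E, ∃ T : Submodule R E,
      T ≠ ⊥ ∧ Disjoint S T ∧ Module.Injective R T ∧ associatedPrimes R T ⊆ {q} := by
  obtain ⟨K, hSK⟩ := exists_isCompl_of_injective S
  have : Nontrivial K := by
    rw [Submodule.nontrivial_iff_ne_bot]
    rintro rfl
    exact hS (eq_top_of_isCompl_bot hSK)
  obtain ⟨q, hq⟩ := associatedPrimes.nonempty R K
  obtain ⟨hqp, φ, hφ⟩ := (isAssociatedPrime_iff_exists_injective_linearMap q K).mp hq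
  obtain ⟨T, hUT, hT⟩ := IsInjectiveEnvelope.exists_inclusion (K.subtype ∘ₗ φ).range
  have hUS : Disjoint (K.subtype ∘ₗ φ).range S := hSK.disjoint.symm.mono_left <| by
    rintro _ ⟨y, rfl⟩
    exact (φ y).2
  let e := LinearEquiv.ofInjective (K.subtype ∘ₗ φ) (K.injective_subtype.comp hφ)
  refine ⟨q, associatedPrimes.subset_of_injective K.injective_subtype hq, T, ?_,
    (hT.disjoint_of_disjoint hUS).symm, hT.1, ?_⟩
  · rintro rfl
    exact not_subsingleton _ ((hT.2.1.comp e.injective).subsingleton)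
  · rw [← hqp.radical, ← associatedPrimes.eq_singleton_of_isPrimary hqp.isPrimary,
      LinearEquiv.AssociatedPrimes.eq e]
    exact hT.associatedPrimes_subset

theorem extVanish_one_of_injective [Module.Injective R E] (hN : PureInjective R N)
    (hκ : ∀ (q : Ideal R) [q.IsPrime], q ∈ associatedPrimes R E →
      ExtVanishAbove R q.ResidueField N 0) : ExtVanish R E N 1 := by
  obtain ⟨S, hS⟩ := exists_maximal_injective_extVanish (E := E) hN
  have := hS.prop.1
  by_cases htop : S = ⊤
  · exact (htop ▸ hS.prop.2 : ExtVanish R ↥(⊤ : Submodule R E) N 1).of_linearEquiv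
      Submodule.topEquiv
  obtain ⟨q, hq, T, hT, hST, hTinj, hTq⟩ := exists_disjoint_injective_of_ne_top htop
  have := hq.isPrime
  have hTN : ExtVanish R T N 1 := extVanish_one_of_forall_mem_torsionBySet_pow hN (hκ q hq)
    (isUniquelyDivisible_of_injective hTq)
    (exists_mem_torsionBySet_pow_of_associatedPrimes_subset hTq)
  have hle : S ⊔ T ≤ S :=
    hS.le_of_ge ⟨injective_sup_of_disjoint hST, hS.prop.2.sup_of_disjoint hST hTN⟩ le_sup_left
  exact absurd (hST.eq_bot_of_ge (le_sup_right.trans hle)) hT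

end InjectiveModule

theorem mem_associatedPrimes_of_isLocalizedModule {R M M' : Type*} [CommRing R] [AddCommGroup M]
    [Module R M] [AddCommGroup M'] [Module R M'] (S : Submonoid R) (f : M →ₗ[R] M')
    [IsLocalizedModule S f] {p : Ideal R} (hS : Disjoint (S : Set R) p)
    (hp : p ∈ associatedPrimes R M) : p ∈ associatedPrimes R M' := by
  obtain ⟨hprime, x, hx⟩ := hp
  have hmem (t : R) : t ∈ p ↔ ∃ n : ℕ, t ^ n • x = 0 := by
    simp only [hx, Ideal.mem_radical_iff, Submodule.mem_colon_singleton, Submodule.mem_bot]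
  refine ⟨hprime, f x, le_antisymm (fun t ht => ?_) ?_⟩
  · obtain ⟨n, hn⟩ := (hmem t).mp ht
    exact ⟨n, Submodule.mem_colon_singleton.mpr (by rw [← map_smul, hn, map_zero]; rfl)⟩
  · rintro t ⟨n, hn⟩
    rw [Submodule.mem_colon_singleton, Submodule.mem_bot, ← map_smul,
      IsLocalizedModule.eq_zero_iff S f] at hn
    obtain ⟨s, hs⟩ := hn
    have hst : (s : R) * t ^ n ∈ p := (hmem _).mpr ⟨1, by rwa [pow_one, mul_smul]⟩
    exact hprime.mem_of_pow_mem n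
      ((hprime.mem_or_mem hst).resolve_left (Set.disjoint_left.mp hS s.2))

section Orthogonal

section Ring

variable {R : Type} [Ring R]

theorem mem_leftPerp1_iff {𝒳 : Set (ModuleCat R)} {M : ModuleCat R} :
    M ∈ leftPerp1 R 𝒳 ↔ ∀ N ∈ 𝒳, ExtVanish R M N 1 :=
  forall₂_congr fun N _ => extV_succ_iff_extVanish M N 0

theorem extVanishAbove_iff {M N : ModuleCat R} {n : ℕ} :
    ExtVanishAbove R M N n ↔ ∀ i, n < i → extV R M N i := by
  refine forall₂_congr fun i hi => ?_
  obtain ⟨j, rfl⟩ := Nat.exists_eq_add_one.mpr (n.zero_le.trans_lt hi)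
  exact (extV_succ_iff_extVanish M N j).symm

theorem mem_cotShift_iff {𝒲 : Set (ModuleCat R)} {n : ℕ} {M : ModuleCat R} :
    M ∈ cotShift R 𝒲 n ↔ ∀ N ∈ 𝒲, ExtVanishAbove R M N n :=
  forall₂_congr fun _ _ => extVanishAbove_iff.symm

theorem IsHereditaryCotorsionPair.extVanishAbove {𝒞 𝒲 : Set (ModuleCat R)}
    (h : IsHereditaryCotorsionPair R 𝒞 𝒲) {C N : ModuleCat R} (hC : C ∈ 𝒞) (hN : N ∈ 𝒲) :
    ExtVanishAbove R C N 0 :=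
  extVanishAbove_iff.mpr (h.2 C hC N hN)

end Ring

variable {R : Type} [CommRing R] {𝒳 : Set (ModuleCat R)} {C : ModuleCat R}

theorem localizedModule_mem_leftPerp1 (h𝒳 : ∀ N ∈ 𝒳, PureInjective R N)
    (hC : C ∈ leftPerp1 R 𝒳) (S : Submonoid R) :
    ModuleCat.of R (LocalizedModule S C) ∈ leftPerp1 R 𝒳 :=
  mem_leftPerp1_iff.mpr fun N hN => (IsFilteredColimit.divBy_comp_mkLinearMap S).extVanish_one
    (h𝒳 N hN) fun _ => mem_leftPerp1_iff.mp hC N hN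

theorem mem_leftPerp1_of_injective [IsNoetherianRing R] (h𝒳 : 𝒳 ⊆ PIFinInj R)
    (hher : ∀ X ∈ leftPerp1 R 𝒳, ∀ N ∈ 𝒳, ExtVanishAbove R X N 0) (hC : C ∈ leftPerp1 R 𝒳)
    {E : Type} [AddCommGroup E] [Module R E] [Module.Injective R E]
    (hE : associatedPrimes R E ⊆ associatedPrimes R C) :
    ModuleCat.of R E ∈ leftPerp1 R 𝒳 := by
  refine mem_leftPerp1_iff.mpr fun N hN =>
    extVanish_one_of_injective (h𝒳 hN).1 fun q _ hq => ?_
  obtain ⟨n, hn⟩ := (h𝒳 hN).2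
  have hCq : ModuleCat.of R (LocalizedModule q.primeCompl C) ∈ leftPerp1 R 𝒳 :=
    localizedModule_mem_leftPerp1 (fun Y hY => (h𝒳 hY).1) hC q.primeCompl
  exact extVanishAbove_residueField_of_isUniquelyDivisible
    (fun A _ _ => extVanishAbove_iff.mpr (hn (ModuleCat.of R A))) (hher _ hCq N hN)
    (mem_associatedPrimes_of_isLocalizedModule q.primeCompl
      (LocalizedModule.mkLinearMap q.primeCompl C) disjoint_compl_left (hE hq))
    (.localizedModule q.primeCompl)

end Orthogonal

/-- let `(𝒞, 𝒲)` be a hereditary cotorsion pair over a commutative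
noetherian ring cogenerated by a class of pure-injective modules of finite injective
dimension. For any module `M` with injective envelope `M ↪ E`:
(i) `M` embeds into some module of `𝒞` iff `E(M) ∈ 𝒞`;
(ii) `M ∈ 𝒞` iff `M` embeds into some module of `𝒞` and `Ω_{-1}(M) = E(M)/M ∈ 𝒞_(1)`. -/
theorem stmt11 (R : Type) [CommRing R] [IsNoetherianRing R]
    (𝒞 𝒲 Pcl : Set (ModuleCat.{0} R))
    (hpair : IsHereditaryCotorsionPair R 𝒞 𝒲)
    (hP : Pcl ⊆ PIFinInj R)
    (hcogen : 𝒞 = leftPerp1 R Pcl)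
    (M : ModuleCat.{0} R)
    (E : Type) [AddCommGroup E] [Module R E] (f : ↥M →ₗ[R] E)
    (henv : IsInjectiveEnvelope R f) :
    ((∃ C ∈ 𝒞, ∃ g : ↥M →ₗ[R] ↥C, Function.Injective g) ↔ ModuleCat.of R E ∈ 𝒞) ∧
    (M ∈ 𝒞 ↔ ((∃ C ∈ 𝒞, ∃ g : ↥M →ₗ[R] ↥C, Function.Injective g) ∧
      ModuleCat.of R (E ⧸ LinearMap.range f) ∈ cotShift R 𝒲 1)) := by
  have hP𝒲 : Pcl ⊆ 𝒲 := fun N hN => hpair.1.2 ▸ fun C hC => (hcogen ▸ hC :) N hN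
  have hinj : Module.Injective R E := henv.1
  have hembed : (∃ C ∈ 𝒞, ∃ g : M →ₗ[R] C, Function.Injective g) ↔ ModuleCat.of R E ∈ 𝒞 := by
    refine ⟨fun ⟨C, hC, g, hg⟩ => ?_, fun hE => ⟨_, hE, f, henv.2.1⟩⟩
    subst hcogen
    exact mem_leftPerp1_of_injective hP
      (fun X hX N hN => hpair.extVanishAbove hX (hP𝒲 hN)) hC
      (henv.associatedPrimes_subset.trans (associatedPrimes.subset_of_injective hg))
  have hexact : Function.Exact f f.range.mkQ := LinearMap.exact_iff.mpr f.range.ker_mkQ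
  refine ⟨hembed, fun hM => ?_, fun ⟨hC, hcosyz⟩ => ?_⟩
  · have hMC : ∃ C ∈ 𝒞, ∃ g : M →ₗ[R] C, Function.Injective g := ⟨M, hM, .id, fun _ _ => id⟩
    exact ⟨hMC, mem_cotShift_iff.mpr fun N hN =>
      (hpair.extVanishAbove hM hN).right_of_exact henv.2.1 f.range.mkQ_surjective hexact
        ((hpair.extVanishAbove (hembed.mp hMC) hN).mono zero_le_one)⟩
  · rw [hpair.1.1]
    exact mem_leftPerp1_iff.mpr fun N hN =>
      (hpair.extVanishAbove (hembed.mp hC) hN).left_of_exact henv.2.1 f.range.mkQ_surjective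
        hexact (mem_cotShift_iff.mp hcosyz N hN) 1 one_pos
end
end

section
/- Let (R, m, k) be a commutative noetherian local ring and N a pure-injective R-module of finite injective dimension. Then for every prime ideal p of R, Ext^j_R(k(p), N) = 0 for every j > depth(R_p). -/
open CategoryTheory Opposite

noncomputable section

/-!
Let `κ` be the residue field of `A = R_p` and `d = depth A`. Dualising a resolution of `κ` by
finitely generated projective `A`-modules gives a complex `K` of flat `R`-modules whose cohomology
`Ext_A^i(κ, A)` is a finite power of `κ`, zero for `i < d` and nonzero for `i = d`. Since `N` is
cotorsion, the terms of `K` have no higher extensions by `N`; write `C^i` for the cokernel of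
`K^{i-1} → K^i`. As `K` is exact below degree `d`, dimension shifting gives `Ext^j(C^d, N) = 0` for
all `j > d`. Now `Ext^j(κ, N) = 0` for `j > d` by descending induction on `j`, starting above the
injective dimension of `N`: if it vanishes in all degrees above `j`, then so does `Ext(C^i, N)` for
every `i`, and the exact sequence `0 → H^d → C^d → K^{d+1} → C^{d+1} → 0` puts `Ext^j(H^d, N)`
between `Ext^j(C^d, N) = 0` and `Ext^{j+2}(C^{d+1}, N) = 0`.
-/

section ExtVanishing

open Limits

universe w v u

variable {C : Type u} [Category.{v} C] [Abelian C]

section FourTermExactSequence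

variable {ι : Type*} {c : ComplexShape ι} (K : HomologicalComplex C c) {i j : ι}

theorem shortExact_homologyι_factorThruImage (hij : c.Rel i j) :
    (ShortComplex.mk (K.homologyι i) (factorThruImage (K.fromOpcycles i j))
      (by simp [← cancel_mono (image.ι (K.fromOpcycles i j))])).ShortExact where
  exact := by
    let φ : ShortComplex.mk (K.homologyι i) (factorThruImage (K.fromOpcycles i j))
        (by simp [← cancel_mono (image.ι (K.fromOpcycles i j))]) ⟶
        ShortComplex.mk (K.homologyι i) (K.fromOpcycles i j) (by simp) :=
      { τ₁ := 𝟙 _, τ₂ := 𝟙 _, τ₃ := image.ι _ }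
    exact (ShortComplex.exact_iff_of_epi_of_isIso_of_mono φ).2
      (ShortComplex.exact_of_f_is_kernel _ (K.homologyIsKernel i j (c.next_eq' hij)))

theorem shortExact_imageι_pOpcycles (hij : c.Rel i j) :
    (ShortComplex.mk (image.ι (K.fromOpcycles i j)) (K.pOpcycles j)
      (by simp [← cancel_epi (factorThruImage _), ← cancel_epi (K.pOpcycles i)])).ShortExact where
  exact := by
    let φ : ShortComplex.mk (K.d i j) (K.pOpcycles j) (by simp) ⟶
        ShortComplex.mk (image.ι (K.fromOpcycles i j)) (K.pOpcycles j)
          (by simp [← cancel_epi (factorThruImage _), ← cancel_epi (K.pOpcycles i)]) :=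
      { τ₁ := K.pOpcycles i ≫ factorThruImage _, τ₂ := 𝟙 _, τ₃ := 𝟙 _ }
    have : Epi φ.τ₁ := epi_comp _ _
    exact (ShortComplex.exact_iff_of_epi_of_isIso_of_mono φ).1
      (ShortComplex.exact_of_g_is_cokernel _ (K.opcyclesIsCokernel i j (c.prev_eq' hij)))

end FourTermExactSequence

variable [HasExt.{w} C] {N : C}

section ShortExact

variable {S : ShortComplex C} {j : ℕ}

theorem subsingleton_ext_X₂ (hS : S.ShortExact) (h₁ : Subsingleton (Abelian.Ext S.X₁ N j))
    (h₃ : Subsingleton (Abelian.Ext S.X₃ N j)) : Subsingleton (Abelian.Ext S.X₂ N j) := by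
  refine subsingleton_of_forall_eq 0 fun x ↦ ?_
  obtain ⟨y, rfl⟩ := Abelian.Ext.contravariant_sequence_exact₂ hS N x (Subsingleton.elim _ _)
  rw [Subsingleton.elim y 0, Abelian.Ext.comp_zero]

theorem subsingleton_ext_X₁ (hS : S.ShortExact) (h₂ : Subsingleton (Abelian.Ext S.X₂ N j))
    (h₃ : Subsingleton (Abelian.Ext S.X₃ N (j + 1))) : Subsingleton (Abelian.Ext S.X₁ N j) := by
  refine subsingleton_of_forall_eq 0 fun x ↦ ?_
  obtain ⟨y, rfl⟩ := Abelian.Ext.contravariant_sequence_exact₁ hS N x (add_comm 1 j)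
    (Subsingleton.elim _ _)
  rw [Subsingleton.elim y 0, Abelian.Ext.comp_zero]

theorem subsingleton_ext_X₃ (hS : S.ShortExact) (h₁ : Subsingleton (Abelian.Ext S.X₁ N j))
    (h₂ : Subsingleton (Abelian.Ext S.X₂ N (j + 1))) :
    Subsingleton (Abelian.Ext S.X₃ N (j + 1)) := by
  refine subsingleton_of_forall_eq 0 fun x ↦ ?_
  obtain ⟨y, rfl⟩ := Abelian.Ext.contravariant_sequence_exact₃ hS N x (Subsingleton.elim _ _)
    (add_comm 1 j)
  rw [Subsingleton.elim y 0, Abelian.Ext.comp_zero]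

end ShortExact

theorem subsingleton_ext_of_sum_comp_eq_id {ι : Type*} [Fintype ι] {X Y : C} (p : ι → (X ⟶ Y))
    (s : ι → (Y ⟶ X)) (hps : ∑ i, p i ≫ s i = 𝟙 X) {j : ℕ}
    (hY : Subsingleton (Abelian.Ext Y N j)) : Subsingleton (Abelian.Ext X N j) := by
  refine subsingleton_of_forall_eq 0 fun x ↦ ?_
  calc
    x = (Abelian.Ext.mk₀ (∑ i, p i ≫ s i)).comp x (zero_add j) := by
      rw [hps, Abelian.Ext.mk₀_id_comp]
    _ = ∑ i, (Abelian.Ext.mk₀ (p i)).comp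
          ((Abelian.Ext.mk₀ (s i)).comp x (zero_add j)) (zero_add j) := by
      rw [Abelian.Ext.mk₀_sum, Abelian.Ext.sum_comp]
      simp only [Abelian.Ext.mk₀_comp_mk₀_assoc]
    _ = 0 := Finset.sum_eq_zero fun i _ ↦ by
      rw [Subsingleton.elim ((Abelian.Ext.mk₀ (s i)).comp x (zero_add j)) 0, Abelian.Ext.comp_zero]

theorem subsingleton_ext_of_iso {X Y : C} (e : X ≅ Y) {j : ℕ}
    (hY : Subsingleton (Abelian.Ext Y N j)) : Subsingleton (Abelian.Ext X N j) :=
  subsingleton_ext_of_sum_comp_eq_id (fun _ : Unit ↦ e.hom) (fun _ ↦ e.inv) (by simp) hY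

theorem subsingleton_ext_of_isZero {X : C} (hX : IsZero X) (j : ℕ) :
    Subsingleton (Abelian.Ext X N j) :=
  subsingleton_of_forall_eq 0 fun x ↦ by
    rw [← Abelian.Ext.mk₀_id_comp x, hX.eq_of_src (𝟙 X) 0, Abelian.Ext.mk₀_zero,
      Abelian.Ext.zero_comp]

section CochainComplex

variable {K : CochainComplex C ℕ}

theorem subsingleton_ext_opcycles
    (hK : ∀ i j, Subsingleton (Abelian.Ext (K.X i) N (j + 1))) {i j : ℕ}
    (hH : Subsingleton (Abelian.Ext (K.homology i) N (j + 1)))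
    (hP : Subsingleton (Abelian.Ext (K.opcycles (i + 1)) N (j + 2))) :
    Subsingleton (Abelian.Ext (K.opcycles i) N (j + 1)) :=
  subsingleton_ext_X₂ (shortExact_homologyι_factorThruImage K (j := i + 1) rfl) hH
    (subsingleton_ext_X₁ (shortExact_imageι_pOpcycles K rfl) (hK _ _) hP)

theorem subsingleton_ext_homology
    (hK : ∀ i j, Subsingleton (Abelian.Ext (K.X i) N (j + 1))) {i j : ℕ}
    (hP : Subsingleton (Abelian.Ext (K.opcycles i) N j))
    (hP' : Subsingleton (Abelian.Ext (K.opcycles (i + 1)) N (j + 2))) :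
    Subsingleton (Abelian.Ext (K.homology i) N j) :=
  subsingleton_ext_X₁ (shortExact_homologyι_factorThruImage K (j := i + 1) rfl) hP
    (subsingleton_ext_X₁ (shortExact_imageι_pOpcycles K rfl) (hK _ _) hP')

theorem subsingleton_ext_opcycles_succ
    (hK : ∀ i j, Subsingleton (Abelian.Ext (K.X i) N (j + 1))) {i j : ℕ} (hi : K.ExactAt i)
    (hP : Subsingleton (Abelian.Ext (K.opcycles i) N (j + 1))) :
    Subsingleton (Abelian.Ext (K.opcycles (i + 1)) N (j + 2)) := by
  have : Subsingleton (Abelian.Ext (K.homology i) N j) :=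
    subsingleton_ext_of_isZero hi.isZero_homology j
  exact subsingleton_ext_X₃ (shortExact_imageι_pOpcycles K rfl)
    (subsingleton_ext_X₃ (shortExact_homologyι_factorThruImage K (j := i + 1) rfl) this hP)
    (hK _ _)

theorem subsingleton_ext_opcycles_of_exactAt
    (hK : ∀ i j, Subsingleton (Abelian.Ext (K.X i) N (j + 1))) {d : ℕ} (hd : ∀ i < d, K.ExactAt i)
    (j : ℕ) : Subsingleton (Abelian.Ext (K.opcycles d) N (d + j + 1)) := by
  induction d generalizing j with
  | zero =>
    have := K.isIso_pOpcycles _ 0 rfl (K.shape _ _ (by simp))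
    exact subsingleton_ext_of_iso (asIso (K.pOpcycles 0)).symm (hK 0 (0 + j))
  | succ d ih =>
    rw [show d + 1 + j + 1 = d + j + 2 by lia]
    exact subsingleton_ext_opcycles_succ hK (hd d d.lt_succ_self)
      (ih (fun i hi ↦ hd i (hi.trans d.lt_succ_self)) j)

theorem subsingleton_ext_opcycles_of_subsingleton_ext_homology (n : ℕ)
    [HasInjectiveDimensionLT N n]
    (hK : ∀ i j, Subsingleton (Abelian.Ext (K.X i) N (j + 1))) {j : ℕ}
    (hH : ∀ i j', j < j' → Subsingleton (Abelian.Ext (K.homology i) N j'))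
    (i j' : ℕ) (hj : j < j') : Subsingleton (Abelian.Ext (K.opcycles i) N j') := by
  by_cases hn : n ≤ j'
  · exact HasInjectiveDimensionLT.subsingleton N n j' hn _
  · obtain ⟨j', rfl⟩ := Nat.exists_eq_succ_of_ne_zero (Nat.ne_zero_of_lt hj)
    exact subsingleton_ext_opcycles hK (hH i _ hj)
      (subsingleton_ext_opcycles_of_subsingleton_ext_homology n hK hH (i + 1) (j' + 2) (by lia))
termination_by n - j'

theorem subsingleton_ext_homology_of_lt (n : ℕ) [HasInjectiveDimensionLT N n]
    (hK : ∀ i j, Subsingleton (Abelian.Ext (K.X i) N (j + 1))) {d : ℕ} (hd : ∀ i < d, K.ExactAt i)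
    (hH : ∀ i j, Subsingleton (Abelian.Ext (K.homology d) N j) →
      Subsingleton (Abelian.Ext (K.homology i) N j))
    (j : ℕ) (hj : d < j) : Subsingleton (Abelian.Ext (K.homology d) N j) := by
  by_cases hn : n ≤ j
  · exact HasInjectiveDimensionLT.subsingleton N n j hn _
  · have ih (i j') (hj' : j < j') : Subsingleton (Abelian.Ext (K.homology i) N j') :=
      hH i j' (subsingleton_ext_homology_of_lt n hK hd hH j' (hj.trans hj'))
    have hP : Subsingleton (Abelian.Ext (K.opcycles d) N j) := by
      obtain ⟨k, rfl⟩ := Nat.exists_eq_add_of_lt hj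
      exact subsingleton_ext_opcycles_of_exactAt hK hd k
    exact subsingleton_ext_homology hK hP
      (subsingleton_ext_opcycles_of_subsingleton_ext_homology n hK ih _ _ (by lia))
termination_by n - j

end CochainComplex

end ExtVanishing

section ProjectiveResolution

universe w v u

variable {C : Type u} [Category.{v} C] [Abelian C] [HasExt.{w} C] {X : C}
  (P : ProjectiveResolution X) {Y : C}

theorem extMk_degree_zero_eq_zero_iff (f : P.complex.X 0 ⟶ Y) (m : ℕ) (hm : 0 + 1 = m)
    (hf : P.complex.d m 0 ≫ f = 0) : P.extMk f m hm hf = 0 ↔ f = 0 := by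
  have h_zero : Limits.IsZero (P.cochainComplex.X 1) :=
    CochainComplex.isZero_of_isStrictlyLE _ 0 1
  have h_mk : P.extMk f m hm hf = 0 ↔ ∃ g : P.cochainComplex.X 1 ⟶ Y,
      P.cochainComplex.d 0 1 ≫ g = (P.cochainComplexXIso 0 0 rfl).hom ≫ f := by
    rw [← P.extEquivCohomologyClass.apply_eq_iff_eq, P.extEquivCohomologyClass_extMk,
      P.extEquivCohomologyClass_zero, CochainComplex.HomComplex.CohomologyClass.mk_eq_zero_iff]
    exact CochainComplex.HomComplex.Cocycle.toSingleMk_mem_coboundaries_iff _ _ _ _ _ 1 (by lia)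
  rw [h_mk, ← cancel_epi (P.cochainComplexXIso 0 0 rfl).hom, Limits.comp_zero]
  exact ⟨fun ⟨g, hg⟩ ↦ by rw [← hg, h_zero.eq_of_src g 0, Limits.comp_zero],
    fun h ↦ ⟨0, by rw [h, Limits.comp_zero]⟩⟩

theorem extMk_eq_zero_iff_exists_d_prev {n : ℕ} (f : P.complex.X n ⟶ Y) (m : ℕ) (hm : n + 1 = m)
    (hf : P.complex.d m n ≫ f = 0) :
    P.extMk f m hm hf = 0 ↔ ∃ g, P.complex.d n ((ComplexShape.up ℕ).prev n) ≫ g = f := by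
  cases n with
  | zero =>
    rw [extMk_degree_zero_eq_zero_iff, P.complex.shape 0 _ (by simp)]
    exact ⟨fun h ↦ ⟨0, by rw [h, Limits.comp_zero]⟩,
      fun ⟨g, hg⟩ ↦ by rw [← hg, Limits.zero_comp]⟩
  | succ n => exact P.extMk_eq_zero_iff f _ _ hf _ (by simp)

section Linear

variable {A : Type*} [Ring A] [Linear A C]

theorem smul_extMk {n : ℕ} (a : A) (f : P.complex.X n ⟶ Y) (m : ℕ) (hm : n + 1 = m)
    (hf : P.complex.d m n ≫ f = 0) :
    a • P.extMk f m hm hf = P.extMk (a • f) m hm (by rw [Linear.comp_smul, hf, smul_zero]) := by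
  rw [Abelian.Ext.smul_eq_comp_mk₀, P.extMk_comp_mk₀]
  simp only [Linear.comp_smul, Category.comp_id]

variable (Y A)

/-- The linear map sending a cocycle of degree `n` in the complex of morphisms from a projective
resolution of `X` to `Y` to its class in `Ext X Y n`. -/
def extMkLinearMap (n : ℕ) : LinearMap.ker ((P.complex.linearYonedaObj A Y).sc n).g.hom →ₗ[A]
    Abelian.Ext X Y n where
  toFun f := P.extMk f.1 ((ComplexShape.up ℕ).next n) (by simp) f.2
  map_add' f g := (P.add_extMk _ _ _ _ _ _).symm
  map_smul' a f := (smul_extMk P a _ _ _ _).symm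

theorem extMkLinearMap_surjective (n : ℕ) : Function.Surjective (extMkLinearMap P Y A n) :=
  fun x ↦ by
    obtain ⟨f, hf, rfl⟩ := P.extMk_surjective x ((ComplexShape.up ℕ).next n) (by simp)
    exact ⟨⟨f, hf⟩, rfl⟩

theorem ker_extMkLinearMap (n : ℕ) : LinearMap.ker (extMkLinearMap P Y A n) =
    LinearMap.range ((P.complex.linearYonedaObj A Y).sc n).moduleCatToCycles := by
  ext f
  exact (extMk_eq_zero_iff_exists_d_prev P f.1 _ (by simp) f.2).trans
    (exists_congr fun g ↦ (Subtype.ext_iff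
      (a1 := ((P.complex.linearYonedaObj A Y).sc n).moduleCatToCycles g)).symm)

/-- Given a projective resolution of `X`, the cohomology of the complex of morphisms from it
to `Y` computes `Ext X Y`. -/
def homologyLinearYonedaObjEquiv (n : ℕ) :
    (P.complex.linearYonedaObj A Y).homology n ≃ₗ[A] Abelian.Ext X Y n :=
  ((P.complex.linearYonedaObj A Y).sc n).moduleCatHomologyIso.toLinearEquiv ≪≫ₗ
    Submodule.quotEquivOfEq _ _ (ker_extMkLinearMap P Y A n).symm ≪≫ₗ
    (extMkLinearMap P Y A n).quotKerEquivOfSurjective (extMkLinearMap_surjective P Y A n)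

end Linear

theorem subsingleton_rootExt_iff [EnoughProjectives C] (n : ℕ) (A : Type*) [Ring A] [Linear A C] :
    Subsingleton (((_root_.Ext A C n).obj (op X)).obj Y) ↔ Subsingleton (Abelian.Ext X Y n) :=
  let P := projectiveResolution X
  let e := (P.isoExt (R := A) n Y).toLinearEquiv ≪≫ₗ homologyLinearYonedaObjEquiv P Y A n
  e.toEquiv.subsingleton_congr

end ProjectiveResolution

section FiniteProjectiveResolution

universe u

theorem projective_of_projective_map_obj {C D : Type*} [Category* C] [Category* D] (F : C ⥤ D)
    [F.Full] [F.Faithful] [F.PreservesEpimorphisms] {P : C} (hP : Projective (F.obj P)) :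
    Projective P where
  factors f e _ :=
    ⟨F.preimage (Projective.factorThru (F.map f) (F.map e)), F.map_injective (by simp)⟩

variable {A : Type u} [Ring A]

theorem exists_epi_fin_pi (M : FGModuleCat.{u} A) :
    ∃ (n : ℕ) (π : FGModuleCat.of A (Fin n → A) ⟶ M), Epi π := by
  obtain ⟨n, f, hf⟩ := Module.Finite.exists_fin' A M
  exact ⟨n, FGModuleCat.ofHom f, (forget₂ (FGModuleCat A) (ModuleCat A)).epi_of_epi_map
    ((ModuleCat.epi_iff_surjective _).2 hf)⟩

instance projective_forget₂_obj_fin_pi (n : ℕ) : Projective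
    ((forget₂ (FGModuleCat A) (ModuleCat A)).obj (FGModuleCat.of A (Fin n → A))) :=
  ModuleCat.projective_of_free (Pi.basisFun A (Fin n))

instance preservesProjectiveObjects_forget₂_fgModuleCat :
    (forget₂ (FGModuleCat.{u} A) (ModuleCat.{u} A)).PreservesProjectiveObjects where
  projective_obj {M} hM := by
    obtain ⟨n, π, hπ⟩ := exists_epi_fin_pi M
    let r : Retract M (FGModuleCat.of A (Fin n → A)) :=
      { i := Projective.factorThru (𝟙 M) π, r := π }
    exact (r.map (forget₂ (FGModuleCat A) (ModuleCat A))).projective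

instance additive_forget₂_fgModuleCat :
    (forget₂ (FGModuleCat.{u} A) (ModuleCat.{u} A)).Additive where

variable [IsNoetherianRing A]

instance enoughProjectives_fgModuleCat : EnoughProjectives (FGModuleCat.{u} A) where
  presentation M := by
    obtain ⟨n, π, hπ⟩ := exists_epi_fin_pi M
    have := projective_of_projective_map_obj (forget₂ (FGModuleCat A) (ModuleCat A))
      (projective_forget₂_obj_fin_pi n)
    exact ⟨{ p := FGModuleCat.of A (Fin n → A), f := π }⟩

theorem exists_projectiveResolution_finite (M : ModuleCat.{u} A) [Module.Finite A M] :
    ∃ P : ProjectiveResolution M, ∀ i, Module.Finite A (P.complex.X i) :=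
  let P := projectiveResolution (FGModuleCat.of A M)
  ⟨(forget₂ (FGModuleCat.{u} A) (ModuleCat.{u} A)).mapProjectiveResolution P,
    fun i ↦ inferInstanceAs (Module.Finite A (P.complex.X i))⟩

end FiniteProjectiveResolution

section ResidueFieldPowers

universe w v u

theorem smul_ext_eq_zero {C : Type u} [Category.{v} C] [Abelian C] [HasExt.{w} C] {A : Type*}
    [Ring A] [Linear A C] {X Y : C} {a : A} (ha : a • 𝟙 X = 0) {n : ℕ} (x : Abelian.Ext X Y n) :
    a • x = 0 := by
  rw [← Abelian.Ext.mk₀_id_comp x, ← Abelian.Ext.smul_comp, ← Abelian.Ext.mk₀_smul, ha,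
    Abelian.Ext.mk₀_zero, Abelian.Ext.zero_comp]

open IsLocalRing

theorem exists_linearEquiv_residueField_pi {A : Type*} [CommRing A] [IsLocalRing A] {H : Type*}
    [AddCommGroup H] [Module A H] [Module.Finite A H]
    (hH : ∀ a ∈ maximalIdeal A, ∀ x : H, a • x = 0) :
    ∃ n : ℕ, Nonempty (H ≃ₗ[A] (Fin n → ResidueField A)) := by
  have hT : Module.IsTorsionBySet A H (maximalIdeal A) := fun x a ↦ hH a a.2 x
  let : Module (ResidueField A) H := hT.module
  have : IsScalarTower A (ResidueField A) H := hT.isScalarTower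
  have : Module.Finite (ResidueField A) H := Module.Finite.of_restrictScalars_finite A _ _
  exact ⟨_, ⟨(Module.finBasis (ResidueField A) H).equivFun.restrictScalars A⟩⟩

variable {A : Type u} [Ring A] {C : Type*} [Category* C] [Abelian C] [HasExt.{w} C] {N : C}
  (F : ModuleCat.{v} A ⥤ C) {H K : ModuleCat.{v} A} {n j : ℕ}

theorem subsingleton_ext_map_of_linearEquiv_pi [F.Additive] (e : H ≃ₗ[A] (Fin n → K))
    (hK : Subsingleton (Abelian.Ext (F.obj K) N j)) :
    Subsingleton (Abelian.Ext (F.obj H) N j) := by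
  refine subsingleton_ext_of_sum_comp_eq_id
    (fun i ↦ F.map (ModuleCat.ofHom (LinearMap.proj i ∘ₗ e.toLinearMap)))
    (fun i ↦ F.map (ModuleCat.ofHom (e.symm.toLinearMap ∘ₗ LinearMap.single A (fun _ ↦ K) i)))
    ?_ hK
  simp only [← F.map_comp, ← F.map_sum, ← F.map_id]
  congr 1
  ext x
  apply e.injective
  ext i
  simp

theorem subsingleton_ext_map_of_pi_linearEquiv [NeZero n] (e : H ≃ₗ[A] (Fin n → K))
    (hH : Subsingleton (Abelian.Ext (F.obj H) N j)) :
    Subsingleton (Abelian.Ext (F.obj K) N j) := by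
  refine subsingleton_ext_of_sum_comp_eq_id
    (fun _ : Unit ↦
      F.map (ModuleCat.ofHom (e.symm.toLinearMap ∘ₗ LinearMap.single A (fun _ ↦ K) 0)))
    (fun _ ↦ F.map (ModuleCat.ofHom (LinearMap.proj 0 ∘ₗ e.toLinearMap))) ?_ hH
  rw [Fintype.sum_unique, ← F.map_comp, ← F.map_id]
  congr 1
  ext x
  simp

end ResidueFieldPowers

section LocalRing

open IsLocalRing

universe w u

section Dual

variable {A : Type u} [CommRing A] (P : ModuleCat.{u} A) [Module.Finite A P] [Module.Projective A P]

instance finite_hom_self : Module.Finite A (P ⟶ ModuleCat.of A A) :=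
  let e : Module.Dual A P ≃ₗ[A] (P ⟶ ModuleCat.of A A) :=
    (ModuleCat.homLinearEquiv (S := A) (M := P) (N := ModuleCat.of A A)).symm
  Module.Finite.equiv e

instance projective_hom_self : Module.Projective A (P ⟶ ModuleCat.of A A) :=
  let e : Module.Dual A P ≃ₗ[A] (P ⟶ ModuleCat.of A A) :=
    (ModuleCat.homLinearEquiv (S := A) (M := P) (N := ModuleCat.of A A)).symm
  Module.Projective.of_equiv e

end Dual

variable {A : Type u} [CommRing A] [IsNoetherianRing A] [IsLocalRing A]

theorem exists_linearEquiv_ext_residueField (Y : ModuleCat.{u} A) [Module.Finite A Y] (i : ℕ) :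
    ∃ n : ℕ, Nonempty (Abelian.Ext (ModuleCat.of A (ResidueField A)) Y i ≃ₗ[A]
      (Fin n → ResidueField A)) := by
  refine exists_linearEquiv_residueField_pi fun a ha x ↦ smul_ext_eq_zero ?_ x
  refine ModuleCat.hom_ext (LinearMap.ext fun y ↦ ?_)
  change a • (y : ResidueField A) = 0
  rw [Algebra.smul_def, ResidueField.algebraMap_eq, (residue_eq_zero_iff a).2 ha, zero_mul]

variable {C : Type*} [Category* C] [Abelian C] [HasExt.{w} C] {N : C}
  (F : ModuleCat.{u} A ⥤ C) [F.Additive] [Limits.PreservesFiniteLimits F]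
  [Limits.PreservesFiniteColimits F]

theorem subsingleton_ext_map_residueField_of_lt (n : ℕ) [HasInjectiveDimensionLT N n]
    (hF : ∀ (P : ModuleCat.{u} A) [Module.Finite A P] [Module.Projective A P] (j : ℕ),
      Subsingleton (Abelian.Ext (F.obj P) N (j + 1))) {d : ℕ}
    (hd : ∀ i < d, Subsingleton
      (Abelian.Ext (ModuleCat.of A (ResidueField A)) (ModuleCat.of A A) i))
    (hd' : Nontrivial (Abelian.Ext (ModuleCat.of A (ResidueField A)) (ModuleCat.of A A) d))
    {j : ℕ} (hj : d < j) :
    Subsingleton (Abelian.Ext (F.obj (ModuleCat.of A (ResidueField A))) N j) := by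
  obtain ⟨P, hP⟩ := exists_projectiveResolution_finite (ModuleCat.of A (ResidueField A))
  let L := P.complex.linearYonedaObj A (ModuleCat.of A A)
  let K := (F.mapHomologicalComplex _).obj L
  let e (i : ℕ) : K.homology i ≅ F.obj (L.homology i) := (L.sc i).mapHomologyIso F
  choose r b using exists_linearEquiv_ext_residueField (ModuleCat.of A A)
  let f (i : ℕ) : L.homology i ≃ₗ[A] (Fin (r i) → ResidueField A) :=
    homologyLinearYonedaObjEquiv P _ A i ≪≫ₗ (b i).some
  have hr : NeZero (r d) := ⟨fun h ↦ by
    have : IsEmpty (Fin (r d)) := h ▸ Fin.isEmpty'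
    exact not_subsingleton _ (b d).some.toEquiv.subsingleton⟩
  have hK (i j) : Subsingleton (Abelian.Ext (K.X i) N (j + 1)) := by
    have := (IsProjective.iff_projective (P.complex.X i)).2 (P.projective i)
    exact hF (ModuleCat.of A (P.complex.X i ⟶ ModuleCat.of A A)) j
  have hKd (i) (hi : i < d) : K.ExactAt i := by
    have : Subsingleton (L.homology i) :=
      have := hd i hi
      (homologyLinearYonedaObjEquiv P _ A i).toEquiv.subsingleton
    exact ((L.exactAt_iff_isZero_homology i).2 (ModuleCat.isZero_of_subsingleton _)).map F
  refine subsingleton_ext_map_of_pi_linearEquiv F (n := r d) (f d) ?_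
  refine subsingleton_ext_of_iso (e d).symm ?_
  refine subsingleton_ext_homology_of_lt n hK hKd (fun i j hd ↦ ?_) j hj
  refine subsingleton_ext_of_iso (e i) ?_
  refine subsingleton_ext_map_of_linearEquiv_pi F (K := ModuleCat.of A (ResidueField A)) (f i) ?_
  exact subsingleton_ext_map_of_pi_linearEquiv F (n := r d) (f d)
    (subsingleton_ext_of_iso (e d).symm hd)

end LocalRing

section Cotorsion

section Abelian

universe w v u

variable {C : Type u} [Category.{v} C] [Abelian C] [HasExt.{w} C] {N : C}

theorem subsingleton_ext_one_of_forall_exists_comp_eq {S : ShortComplex C} (hS : S.ShortExact)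
    [Projective S.X₂] (h : ∀ f : S.X₁ ⟶ N, ∃ g : S.X₂ ⟶ N, S.f ≫ g = f) :
    Subsingleton (Abelian.Ext S.X₃ N 1) := by
  refine subsingleton_of_forall_eq 0 fun x ↦ ?_
  obtain ⟨y, rfl⟩ := Abelian.Ext.contravariant_sequence_exact₃ hS N x
    (Abelian.Ext.eq_zero_of_projective _) (add_comm 1 0)
  obtain ⟨f, rfl⟩ := (Abelian.Ext.mk₀_bijective _ _).2 y
  obtain ⟨g, rfl⟩ := h f
  rw [← Abelian.Ext.mk₀_comp_mk₀]
  exact hS.extClass_comp_assoc _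

end Abelian

section Kernel

variable {R : Type*} [CommRing R] {F M : Type*} [AddCommGroup F] [Module R F] [AddCommGroup M]
  [Module R M] [Module.Flat R M] {q : F →ₗ[R] M}

theorem lTensor_ker_subtype_injective (hq : Function.Surjective q) (Q : Type*) [AddCommGroup Q]
    [Module R Q] : Function.Injective ((LinearMap.ker q).subtype.lTensor Q) :=
  LinearMap.lTensor_injective_of_exact_of_flat _ hq _ (Submodule.injective_subtype _)
    (LinearMap.exact_subtype_ker_map _) Q

theorem flat_ker_of_surjective [Module.Flat R F] (hq : Function.Surjective q) :
    Module.Flat R (LinearMap.ker q) := by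
  refine Module.Flat.iff_rTensor_preserves_injective_linearMap.2 fun P P' _ _ _ _ f hf ↦ ?_
  have h : Function.Injective ((LinearMap.ker q).subtype.lTensor P' ∘ₗ f.rTensor _) := by
    rw [LinearMap.lTensor_comp_rTensor, ← LinearMap.rTensor_comp_lTensor]
    exact (Module.Flat.rTensor_preserves_injective_linearMap f hf).comp
      (lTensor_ker_subtype_injective hq P)
  exact Function.Injective.of_comp h

end Kernel

variable {R : Type} [CommRing R]

theorem extV_iff {M N : ModuleCat.{0} R} {n : ℕ} :
    extV R M N n ↔ Subsingleton (Abelian.Ext M N n) :=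
  subsingleton_rootExt_iff n ℤ

theorem isPureMono_ker_subtype_s13 {F M : Type} [AddCommGroup F] [Module R F] [AddCommGroup M]
    [Module R M] [Module.Flat R M] {q : F →ₗ[R] M} (hq : Function.Surjective q) :
    IsPureMono R (LinearMap.ker q).subtype :=
  ⟨Submodule.injective_subtype _, fun Q _ _ ↦ lTensor_ker_subtype_injective hq Q⟩

theorem mem_rightPerp1_flat_of_pureInjective {N : Type} [AddCommGroup N] [Module R N]
    (hN : PureInjective R N) : ModuleCat.of R N ∈ rightPerp1 R {M | Module.Flat R M} := by
  intro M (hM : Module.Flat R M)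
  have hS := M.shortExact_projectiveShortComplex
  have hq := (ModuleCat.epi_iff_surjective _).1 hS.epi_g
  rw [extV_iff]
  refine subsingleton_ext_one_of_forall_exists_comp_eq hS fun f ↦ ?_
  obtain ⟨g, hg⟩ := hN _ _ _ (isPureMono_ker_subtype_s13 hq) f.hom
  exact ⟨ModuleCat.ofHom g, ModuleCat.hom_ext hg⟩

theorem subsingleton_ext_succ_of_flat {N : ModuleCat.{0} R}
    (hN : N ∈ rightPerp1 R {M | Module.Flat R M}) (M : ModuleCat.{0} R) [Module.Flat R M] (i : ℕ) :
    Subsingleton (Abelian.Ext M N (i + 1)) := by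
  induction i generalizing M with
  | zero => exact extV_iff.1 (hN M ‹_›)
  | succ i ih =>
    have hS := M.shortExact_projectiveShortComplex
    have : Module.Flat R M.projectiveShortComplex.X₁ :=
      flat_ker_of_surjective ((ModuleCat.epi_iff_surjective _).1 hS.epi_g)
    exact subsingleton_ext_X₃ hS (ih _)
      (subsingleton_of_forall_eq 0 Abelian.Ext.eq_zero_of_projective)

end Cotorsion

section ResidueField

open IsLocalRing

variable {R : Type} [CommRing R] {N : ModuleCat.{0} R}

theorem hasInjectiveDimensionLT_of_injDimLE {n : ℕ} (hN : injDimLE R N n) :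
    HasInjectiveDimensionLT N (n + 1) :=
  (hasInjectiveDimensionLT_iff N (n + 1)).2 fun i hi M e ↦
    have := extV_iff.1 (hN M i hi)
    Subsingleton.elim e 0

theorem exists_nontrivial_ext_of_rdepth_lt {A M : Type} [CommRing A] [IsLocalRing A]
    [AddCommGroup M] [Module A M] {j : ℕ} (hj : rdepth A M < j) :
    ∃ d < j, Nontrivial (Abelian.Ext (ModuleCat.of A (ResidueField A)) (ModuleCat.of A M) d) ∧
      ∀ i < d, Subsingleton
        (Abelian.Ext (ModuleCat.of A (ResidueField A)) (ModuleCat.of A M) i) := by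
  classical
  obtain ⟨_, ⟨i, rfl, hi⟩, hij⟩ := sInf_lt_iff.1 hj
  rw [extV_iff, not_subsingleton_iff_nontrivial] at hi
  have h := Exists.intro (p := fun i ↦ Nontrivial
    (Abelian.Ext (ModuleCat.of A (ResidueField A)) (ModuleCat.of A M) i)) i hi
  exact ⟨Nat.find h, (Nat.find_min' h hi).trans_lt (Nat.cast_lt.1 hij), Nat.find_spec h,
    fun i hi ↦ not_nontrivial_iff_subsingleton.1 (Nat.find_min h hi)⟩

/-- For a module `X` over an `R`-algebra `A`, the given `R`-module structure on `X` agrees with the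
one obtained by restricting scalars from `A` to `R`. -/
def isoRestrictScalarsObj (A X : Type) [CommRing A] [Algebra R A] [AddCommGroup X]
    [Module R X] [Module A X] [IsScalarTower R A X] :
    ModuleCat.of R X ≅ (ModuleCat.restrictScalars (algebraMap R A)).obj (ModuleCat.of A X) :=
  let e : X ≃ₗ[R] (ModuleCat.restrictScalars (algebraMap R A)).obj (ModuleCat.of A X) :=
    { AddEquiv.refl X with map_smul' := fun r x ↦ (algebraMap_smul A r (x : X)).symm }
  e.toModuleIso

theorem subsingleton_ext_residueField_of_rdepth_lt (hN : N ∈ rightPerp1 R {M | Module.Flat R M})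
    {n : ℕ} [HasInjectiveDimensionLT N n] (A : Type) [CommRing A] [IsNoetherianRing A]
    [IsLocalRing A] [Algebra R A] [Module.Flat R A] {j : ℕ} (hj : rdepth A A < j) :
    Subsingleton (Abelian.Ext (ModuleCat.of R (ResidueField A)) N j) := by
  obtain ⟨d, hdj, hd, hd'⟩ := exists_nontrivial_ext_of_rdepth_lt hj
  refine subsingleton_ext_of_iso (isoRestrictScalarsObj A (ResidueField A))
    (subsingleton_ext_map_residueField_of_lt _ n (fun P _ _ j ↦ ?_) hd' hd hdj)
  let : Module R P := Module.compHom P (algebraMap R A)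
  have : IsScalarTower R A P := .of_algebraMap_smul fun _ _ ↦ rfl
  have : Module.Flat R P := Module.Flat.trans R A P
  exact subsingleton_ext_of_iso (isoRestrictScalarsObj A P).symm
    (subsingleton_ext_succ_of_flat hN _ j)

/-- The module `k(p)`, defined as the localization of `R ⧸ p`, is the residue field of `R_p`. -/
def resFieldEquiv (p : PrimeSpectrum R) :
    resField R p ≃ₗ[R] ResidueField (Localization.AtPrime p.asIdeal) :=
  let S := p.asIdeal.primeCompl
  let A := Localization.AtPrime p.asIdeal
  have h : p.asIdeal.localized' A S (Algebra.linearMap R A) = maximalIdeal A :=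
    (Ideal.localized'_eq_map ..).trans Localization.AtPrime.map_eq_maximalIdeal
  let e : (A ⧸ p.asIdeal.localized' A S (Algebra.linearMap R A)) ≃ₗ[A] A ⧸ maximalIdeal A :=
    Submodule.quotEquivOfEq _ _ h
  IsLocalizedModule.iso S (p.asIdeal.toLocalizedQuotient' A S (Algebra.linearMap R A)) ≪≫ₗ
    e.restrictScalars R

end ResidueField

theorem stmt13_general (R : Type) [CommRing R] (N : ModuleCat.{0} R)
    (hN : N ∈ rightPerp1 R {M | Module.Flat R M}) (hfid : ∃ n : ℕ, injDimLE R N n)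
    (p : PrimeSpectrum R) [IsNoetherianRing (Localization.AtPrime p.asIdeal)] (j : ℕ)
    (hj : ringDepthAt R p < (j : ℕ∞)) : extV R (ModuleCat.of R (resField R p)) N j := by
  obtain ⟨n, hn⟩ := hfid
  have := hasInjectiveDimensionLT_of_injDimLE hn
  exact extV_iff.2 <| subsingleton_ext_of_iso (resFieldEquiv p).toModuleIso <|
    subsingleton_ext_residueField_of_rdepth_lt hN (n := n + 1) _ hj

/-- over a commutative noetherian local ring `R`, a pure-injective module
`N` of finite injective dimension satisfies `Ext^j_R(k(p), N) = 0` for every prime `p`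
and every `j > depth(R_p)`. -/
theorem stmt13 (R : Type) [CommRing R] [IsNoetherianRing R] [IsLocalRing R]
    (N : Type) [AddCommGroup N] [Module R N]
    (hpi : PureInjective R N) (hfid : ∃ n : ℕ, injDimLE R (ModuleCat.of R N) n) :
    ∀ (p : PrimeSpectrum R) (j : ℕ), ringDepthAt R p < (j : ℕ∞) →
      extV R (ModuleCat.of R (resField R p)) (ModuleCat.of R N) j :=
  fun p ↦ stmt13_general R (ModuleCat.of R N) (mem_rightPerp1_flat_of_pureInjective hpi) hfid p
end
end
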